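/- Let n ≥ 6 be a natural number. The genus-zero Hurwitz number h_{1^3} with one degenerate branch point of reduced ramification type 1^3 (i.e., one permutation of cycle type (2,2,2,1^{n-6})) and m = 2n−5 simple branch points satisfies h_{1^3} = (4/3)·((2n−5)!/(n−6)!)·n^{n−6}. -/

import Mathlib

set_option linter.unusedSectionVars false

namespace Hur
open Finset

/-- Hurwitz binomial-type polynomials `x (x + k_A)^(|A|-1)`. -/
noncomputable def gpol {ι : Type*} [DecidableEq ι] (k : ι → ℝ) (A : Finset ι) (x : ℝ) : ℝ :=
  if A = ∅ then 1 else x * (x + ∑ i ∈ A, k i) ^ (A.card - 1)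

theorem gpol_zero {ι : Type*} [DecidableEq ι] (k : ι → ℝ) (A : Finset ι) :
    gpol k A 0 = if A = ∅ then 1 else 0 := by
  unfold gpol; split_ifs <;> simp

theorem gpol_deriv {ι : Type*} [DecidableEq ι] (k : ι → ℝ) (A : Finset ι) (x : ℝ) :
    HasDerivAt (gpol k A) (∑ i ∈ A, gpol k (A.erase i) (x + k i)) x := by
  unfold gpol
  by_cases hA : A = ∅
  · subst hA; simpa using hasDerivAt_const x (1:ℝ)
  · simp only [hA, if_false]
    have h1 : HasDerivAt (fun x : ℝ => x * (x + ∑ i ∈ A, k i) ^ (A.card - 1))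
      (1 * (x + ∑ i ∈ A, k i) ^ (A.card - 1) + x * (((A.card - 1 : ℕ) : ℝ) *
        (x + ∑ i ∈ A, k i) ^ (A.card - 1 - 1) * 1)) x := by
      exact (hasDerivAt_id x).mul (((hasDerivAt_id x).add_const _).pow _)
    convert h1 using 1
    by_cases h2 : A.card = 1
    · obtain ⟨i, rfl⟩ := Finset.card_eq_one.1 h2
      simp
    · have hc : 2 ≤ A.card := by
        have := Finset.card_pos.2 (Finset.nonempty_iff_ne_empty.2 hA); omega
      obtain ⟨m, hm⟩ := Nat.exists_eq_add_of_le hc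
      have : ∀ i ∈ A, (if A.erase i = ∅ then (1:ℝ) else
          (x + k i) * (x + k i + ∑ j ∈ A.erase i, k j) ^ ((A.erase i).card - 1)) =
          (x + k i) * (x + ∑ j ∈ A, k j) ^ m := by
        intro i hi
        have hc2 : (A.erase i).card = m + 1 := by rw [Finset.card_erase_of_mem hi]; omega
        have : A.erase i ≠ ∅ := by
          intro h; rw [h] at hc2; simp at hc2
        rw [if_neg this, hc2, ← Finset.add_sum_erase A k hi]
        simp [add_assoc]
      rw [Finset.sum_congr rfl this, ← Finset.sum_mul, Finset.sum_add_distrib]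
      have e1 : A.card - 1 = m + 1 := by omega
      rw [e1]
      simp only [sum_const, nsmul_eq_mul, hm]
      push_cast
      simp
      ring

theorem sum_powerset_sum_mem {ι : Type*} [DecidableEq ι] (K : Finset ι) (f : Finset ι → ι → ℝ) :
    ∑ A ∈ K.powerset, ∑ j ∈ A, f A j =
      ∑ j ∈ K, ∑ A ∈ (K.erase j).powerset, f (insert j A) j := by
  rw [Finset.sum_sigma', Finset.sum_sigma']
  refine Finset.sum_bij' (fun p _ => ⟨p.2, p.1.erase p.2⟩) (fun p _ => ⟨insert p.1 p.2, p.1⟩)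
    ?_ ?_ ?_ ?_ ?_
  · rintro ⟨A, j⟩ h
    simp only [mem_sigma, mem_powerset] at h ⊢
    exact ⟨h.1 h.2, Finset.erase_subset_erase _ h.1⟩
  · rintro ⟨j, A⟩ h
    simp only [mem_sigma, mem_powerset] at h ⊢
    refine ⟨?_, Finset.mem_insert_self _ _⟩
    exact Finset.insert_subset h.1 (h.2.trans (Finset.erase_subset _ _))
  · rintro ⟨A, j⟩ h
    simp only [mem_sigma, mem_powerset] at h
    simp [Finset.insert_erase h.2]
  · rintro ⟨j, A⟩ h
    simp only [mem_sigma, mem_powerset] at h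
    have : j ∉ A := fun hj => by simpa using h.2 hj
    simp [this]
  · rintro ⟨A, j⟩ h
    simp only [mem_sigma, mem_powerset] at h
    simp [Finset.insert_erase h.2]

theorem hurwitz_binom {ι : Type*} [DecidableEq ι] (k : ι → ℝ) (K : Finset ι) (x y : ℝ) :
    ∑ A ∈ K.powerset, gpol k A x * gpol k (K \ A) y = gpol k K (x + y) := by
  induction hn : K.card generalizing K x y with
  | zero =>
    have : K = ∅ := Finset.card_eq_zero.1 hn
    subst this; simp [gpol]
  | succ n ih =>
    have hd : ∀ x, HasDerivAt (fun x => ∑ A ∈ K.powerset, gpol k A x * gpol k (K \ A) y - gpol k K (x + y)) 0 x := by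
      intro x
      have h1 : HasDerivAt (fun x => ∑ A ∈ K.powerset, gpol k A x * gpol k (K \ A) y)
          (∑ A ∈ K.powerset, (∑ i ∈ A, gpol k (A.erase i) (x + k i)) * gpol k (K \ A) y) x :=
        HasDerivAt.fun_sum (fun A _ => (gpol_deriv k A x).mul_const _)
      have h2 : HasDerivAt (fun x => gpol k K (x + y))
          (∑ i ∈ K, gpol k (K.erase i) (x + y + k i)) x :=
        HasDerivAt.comp_add_const x y (gpol_deriv k K (x + y))
      have h3 := h1.fun_sub h2
      refine h3.congr_deriv ?_
      simp_rw [Finset.sum_mul]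
      rw [sum_powerset_sum_mem, sub_eq_zero]
      refine Finset.sum_congr rfl fun j hj => ?_
      have e := ih (K.erase j) (x + k j) y (by rw [Finset.card_erase_of_mem hj]; omega)
      rw [show x + y + k j = x + k j + y by ring, ← e]
      refine Finset.sum_congr rfl fun A hA => ?_
      have hjA : j ∉ A := fun h => by simpa using (Finset.mem_powerset.1 hA) h
      rw [Finset.erase_insert hjA]
      congr 2
      ext t; simp; tauto
    have hc := is_const_of_deriv_eq_zero (fun x => (hd x).differentiableAt) (fun x => (hd x).deriv) x 0
    simp only [gpol_zero, zero_add] at hc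
    have : ∑ A ∈ K.powerset, (if A = ∅ then (1:ℝ) else 0) * gpol k (K \ A) y = gpol k K y := by
      rw [Finset.sum_eq_single ∅]
      · simp
      · intro b _ hb; simp [hb]
      · simp
    rw [this] at hc
    linarith

end Hur

namespace Hur
open Finset

theorem node_prod (i d : ℕ) (h : i ≤ d) :
    ∏ j ∈ (range (d+1)).erase i, ((j:ℝ) - i) = (-1)^i * i.factorial * (d - i).factorial := by
  induction d, h using Nat.le_induction with
  | base =>
    have : (range (i+1)).erase i = range i := by ext; simp; omega
    rw [this]
    have : ∏ j ∈ range i, ((j:ℝ) - i) = ∏ j ∈ range i, (-1) * (((i - 1 - j : ℕ):ℝ) + 1) := by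
      refine Finset.prod_congr rfl fun j hj => ?_
      have := mem_range.1 hj
      have e : ((i - 1 - j : ℕ):ℝ) = i - 1 - j := by
        rw [Nat.sub_sub, Nat.cast_sub (by omega)]; push_cast; ring
      rw [e]; ring
    rw [this, Finset.prod_mul_distrib, Finset.prod_range_reflect (fun j => ((j:ℝ) + 1)) i]
    simp only [prod_const, card_range]
    rw [← Finset.prod_range_add_one_eq_factorial]
    push_cast; simp
  | succ d hd ih =>
    have : (range (d+1+1)).erase i = insert (d+1) ((range (d+1)).erase i) := by
      ext; simp; omega
    rw [this, Finset.prod_insert (by simp), ih, show d + 1 - i = (d - i) + 1 by omega,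
      Nat.factorial_succ]
    push_cast
    rw [Nat.cast_sub hd]; ring

theorem part_frac (d : ℕ) (q : ℝ) (hq : 0 < q) :
    q ^ d / ∏ t ∈ range (d+1), (q + t) =
      ∑ r ∈ range (d+1), (-1)^(d-r) * (r:ℝ)^d / (r.factorial * (d-r).factorial) / (q + r) := by
  have hinj : Set.InjOn (fun i : ℕ => -(i:ℝ)) (range (d+1)) := by
    intro a _ b _ h; simpa using h
  have h1 := Lagrange.eq_interpolate_of_eval_eq (s := range (d+1)) (v := fun i : ℕ => -(i:ℝ))
    (r := fun i => (-(i:ℝ))^d) (f := (Polynomial.X ^ d : Polynomial ℝ)) hinj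
    (by rw [Polynomial.degree_X_pow, card_range]; exact_mod_cast Nat.lt_succ_self d) (by simp)
  have h2 := congrArg (Polynomial.eval q) h1
  rw [Lagrange.eval_interpolate_not_at_node] at h2
  · simp only [Polynomial.eval_pow, Polynomial.eval_X, Lagrange.eval_nodal, sub_neg_eq_add] at h2
    have hne : ∏ t ∈ range (d+1), (q + (t:ℝ)) ≠ 0 := by
      refine Finset.prod_ne_zero_iff.2 fun t _ => by positivity
    rw [h2, mul_div_cancel_left₀ _ hne]
    refine Finset.sum_congr rfl fun r hr => ?_
    have hr' : r ≤ d := by have := mem_range.1 hr; omega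
    have e : Lagrange.nodalWeight (range (d+1)) (fun i : ℕ => -(i:ℝ)) r =
        ((-1:ℝ)^r * r.factorial * (d - r).factorial)⁻¹ := by
      rw [← node_prod r d hr', Lagrange.nodalWeight, Finset.prod_inv_distrib]
      congr 1
      refine Finset.prod_congr rfl fun j _ => by ring
    rw [e]
    have e2 : (-(r:ℝ))^d = (-1)^r * ((-1)^(d-r) * (r:ℝ)^d) := by
      rw [← mul_assoc, ← pow_add, Nat.add_sub_cancel' hr', neg_pow]
    rw [e2]
    have : ((-1:ℝ))^r ≠ 0 := by positivity
    field_simp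
  · intro i _ h
    have : (0:ℝ) ≤ i := by positivity
    linarith

/-- `u_k = k^k / k!` -/
noncomputable def uu (k : ℕ) : ℝ := (k:ℝ)^k / k.factorial

theorem asc_prod (q d : ℕ) (hq : 1 ≤ q) :
    (∏ t ∈ range (d+1), ((q:ℝ) + t)) * (q-1).factorial = (q+d).factorial := by
  induction d with
  | zero =>
    obtain ⟨m, rfl⟩ := Nat.exists_eq_add_of_le hq
    rw [Nat.add_comm 1 m]
    simp [Nat.factorial_succ]
  | succ d ih =>
    rw [Finset.prod_range_succ, mul_right_comm, ih, ← Nat.add_assoc, Nat.factorial_succ]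
    push_cast; ring

theorem uu_sub (p r : ℕ) (h : r < p) :
    uu (p - r) = ((p:ℝ) - r)^(p-1-r) / (p-1-r).factorial := by
  obtain ⟨m, rfl⟩ := Nat.exists_eq_add_of_lt h
  have e1 : r + m + 1 - r = m + 1 := by omega
  have e2 : r + m + 1 - 1 - r = m := by omega
  rw [e1, e2, uu, Nat.factorial_succ]
  push_cast
  have : (m:ℝ) + 1 ≠ 0 := by positivity
  have e3 : (r:ℝ) + m + 1 - r = m + 1 := by ring
  rw [e3]
  field_simp
  ring

theorem pair_half_aux (p : ℕ) (q : ℝ) (hq : 0 < q) :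
    ∑ r ∈ range p, uu r * uu (p - r) / (q + r) =
      ∑ i ∈ range p, (p:ℝ)^i / i.factorial *
        (q ^ (p-1-i) / ∏ t ∈ range (p-1-i+1), (q + t)) := by
  simp_rw [part_frac _ q hq, Finset.mul_sum]
  rw [Finset.sum_comm' (t' := range p) (s' := fun r => range (p - r))]
  swap
  · intro x y; simp only [mem_range]; omega
  refine Finset.sum_congr rfl fun r hr => ?_
  have hr := mem_range.1 hr
  rw [uu_sub p r hr, sub_eq_add_neg, add_pow, uu, Finset.sum_div, Finset.mul_sum, Finset.sum_div]
  have e : p - 1 - r + 1 = p - r := by omega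
  rw [e]
  refine Finset.sum_congr rfl fun i hi => ?_
  have hi := mem_range.1 hi
  have e1 : p - 1 - i - r = p - 1 - r - i := by omega
  have e2 : p - 1 - i = r + (p - 1 - r - i) := by omega
  rw [e1, e2, pow_add, Nat.choose_eq_factorial_div_factorial (show i ≤ p - 1 - r by omega),
    Nat.cast_div (Nat.factorial_mul_factorial_dvd_factorial (by omega)) (by positivity),
    neg_pow (r:ℝ)]
  push_cast
  have : q + r ≠ 0 := by positivity
  field_simp

theorem pair_half (p q : ℕ) (hq : 1 ≤ q) :
    q * uu q * ∑ r ∈ range p, uu r * uu (p - r) / ((q:ℝ) + r) =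
      ∑ i ∈ range p, (p:ℝ)^i * (q:ℝ)^(p+q-1-i) / (i.factorial * (p+q-1-i).factorial) := by
  have hq0 : (0:ℝ) < q := by exact_mod_cast hq
  rw [pair_half_aux p q hq0, Finset.mul_sum]
  refine Finset.sum_congr rfl fun i hi => ?_
  have hi := mem_range.1 hi
  have h1 := asc_prod q (p-1-i) hq
  have e : p + q - 1 - i = q + (p - 1 - i) := by omega
  have h2 : (q.factorial : ℝ) = q * (q-1).factorial := by
    rw [← Nat.mul_factorial_pred (by omega)]; push_cast; ring
  have h3 : (∏ t ∈ range (p-1-i+1), ((q:ℝ) + t)) ≠ 0 :=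
    Finset.prod_ne_zero_iff.2 fun t _ => by positivity
  rw [e, ← h1, uu, h2, pow_add]
  field_simp

theorem pair_ident (p q : ℕ) (hp : 1 ≤ p) (hq : 1 ≤ q) :
    q * uu q * ∑ r ∈ range p, uu r * uu (p - r) / ((q:ℝ) + r) +
    p * uu p * ∑ r ∈ range q, uu r * uu (q - r) / ((p:ℝ) + r) = uu (p + q) := by
  rw [pair_half p q hq, pair_half q p hp]
  have h2 : ∑ i ∈ range q, (q:ℝ)^i * (p:ℝ)^(q+p-1-i) / (i.factorial * (q+p-1-i).factorial) =
     ∑ i ∈ range q, (p:ℝ)^(p + i) * (q:ℝ)^(p+q-1-(p+i)) / ((p+i).factorial * (p+q-1-(p+i)).factorial) := by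
    rw [← Finset.sum_range_reflect]
    refine Finset.sum_congr rfl fun i hi => ?_
    have hi := mem_range.1 hi
    have e1 : p + q - 1 - (p + i) = q - 1 - i := by omega
    have e2 : q + p - 1 - (q - 1 - i) = p + i := by omega
    rw [e1, e2]; ring
  rw [h2, ← Finset.sum_range_add (fun i => (p:ℝ)^i * (q:ℝ)^(p+q-1-i) / (i.factorial * (p+q-1-i).factorial))]
  have h3 : uu (p + q) = ((p:ℝ) + q)^(p+q-1) / (p+q-1).factorial := by
    have := uu_sub (p+q) 0 (by omega)
    simpa using this
  rw [h3, add_pow, Finset.sum_div, show p + q - 1 + 1 = p + q by omega]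
  refine Finset.sum_congr rfl fun i hi => ?_
  have hi := mem_range.1 hi
  rw [Nat.choose_eq_factorial_div_factorial (show i ≤ p + q - 1 by omega),
    Nat.cast_div (Nat.factorial_mul_factorial_dvd_factorial (by omega)) (by positivity)]
  push_cast
  field_simp

end Hur

namespace Hur
open Finset

/-- `a_k = k^(k+1) / k!` -/
noncomputable def aa (k : ℕ) : ℝ := k * uu k

theorem uu_pos (k : ℕ) : 0 < uu k := by
  unfold uu
  rcases Nat.eq_zero_or_pos k with rfl | h
  · simp
  · positivity

theorem aa_pos (k : ℕ) (h : 1 ≤ k) : 0 < aa k := by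
  have := uu_pos k
  have : (0:ℝ) < k := by exact_mod_cast h
  unfold aa; positivity

theorem abel_aux (K : ℕ) :
    ∑ m ∈ range (K+1), (K.choose m : ℝ) * (((1:ℝ)+m)^m/(1+m) * ((1+(K-m:ℕ))^(K-m)/(1+(K-m:ℕ)))) =
      2 * (2+(K:ℝ))^K / (2+K) := by
  have hg : ∀ (A : Finset (Fin K)) (x : ℝ), 0 < x → gpol (fun _ => (1:ℝ)) A x =
      x * (x + A.card)^(A.card) / (x + A.card) := by
    intro A x hx
    unfold gpol
    split_ifs with h
    · subst h; simp [hx.ne']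
    · have : 1 ≤ A.card := Finset.card_pos.2 (Finset.nonempty_iff_ne_empty.2 h)
      obtain ⟨c, hc⟩ := Nat.exists_eq_add_of_le this
      rw [hc]
      simp only [sum_const, hc, nsmul_eq_mul, mul_one]
      rw [show 1 + c - 1 = c by omega, Nat.add_comm 1 c]
      have : x + ((c+1 : ℕ):ℝ) ≠ 0 := by positivity
      field_simp
      ring
  have h := hurwitz_binom (fun _ : Fin K => (1:ℝ)) univ 1 1
  have h2 : ∀ A ∈ (univ : Finset (Fin K)).powerset,
      gpol (fun _ => (1:ℝ)) A 1 * gpol (fun _ => (1:ℝ)) (univ \ A) 1 =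
      (fun m : ℕ => (((1:ℝ)+m)^m/(1+m) * ((1+(K-m:ℕ))^(K-m)/(1+(K-m:ℕ))))) A.card := by
    intro A _
    rw [hg _ _ one_pos, hg _ _ one_pos, Finset.card_sdiff_of_subset (Finset.subset_univ A)]
    simp
  rw [Finset.sum_congr rfl h2, Finset.sum_powerset_apply_card (fun m : ℕ =>
    (((1:ℝ)+m)^m/(1+m) * ((1+(K-m:ℕ))^(K-m)/(1+(K-m:ℕ))))), hg _ _ (by norm_num)] at h
  simp only [card_univ, Fintype.card_fin, nsmul_eq_mul] at h
  rw [h]; norm_num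

theorem abel_X (k : ℕ) (hk : 1 ≤ k) :
    (k:ℝ)^3 * ∑ r ∈ Ico 1 k, (uu r / r) * (uu (k - r) / (k - r : ℕ)) = 2 * ((k:ℝ) - 1) * aa k := by
  rcases Nat.lt_or_ge k 2 with h | h
  · have : k = 1 := by omega
    subst this; simp
  obtain ⟨K, rfl⟩ := Nat.exists_eq_add_of_le h
  have hw : ∀ m : ℕ, uu (1 + m) / (1 + m : ℕ) = ((1:ℝ)+m)^m/(1+m) / m.factorial := by
    intro m
    rw [uu, Nat.add_comm 1 m, Nat.factorial_succ]
    push_cast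
    have : (m:ℝ) + 1 ≠ 0 := by positivity
    rw [add_comm (1:ℝ) m]
    field_simp
    ring
  rw [Finset.sum_Ico_eq_sum_range, show 2 + K - 1 = K + 1 by omega]
  have : ∀ m ∈ range (K+1), (uu (1+m) / (1 + m : ℕ)) * (uu (2 + K - (1+m)) / (2 + K - (1+m) : ℕ)) =
      (K.choose m : ℝ) * (((1:ℝ)+m)^m/(1+m) * ((1+(K-m:ℕ))^(K-m)/(1+(K-m:ℕ)))) / K.factorial := by
    intro m hm
    have hm := mem_range.1 hm
    rw [show 2 + K - (1+m) = 1 + (K - m) by omega, hw, hw,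
      Nat.choose_eq_factorial_div_factorial (show m ≤ K by omega),
    Nat.cast_div (Nat.factorial_mul_factorial_dvd_factorial (by omega)) (by positivity)]
    push_cast
    have : (K.factorial : ℝ) ≠ 0 := by positivity
    field_simp
  rw [Finset.sum_congr rfl this, ← Finset.sum_div, abel_aux, aa, uu]
  rw [show 2 + K = K + 1 + 1 by omega, Nat.factorial_succ, Nat.factorial_succ]
  push_cast
  have : (K.factorial : ℝ) ≠ 0 := by positivity
  have h1 : (K:ℝ) + 1 ≠ 0 := by positivity
  have h2 : (K:ℝ) + 1 + 1 ≠ 0 := by positivity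
  rw [show (2:ℝ) + K = K + 1 + 1 by ring]
  field_simp
  ring

section subset_sum
variable {ι : Type*} [DecidableEq ι] (k : ι → ℝ)

/-- auxiliary sum in the expansion of the subset sum -/
noncomputable def hpol (A : Finset ι) (x : ℝ) : ℝ :=
  ∑ j ∈ A, k j / (x * (x + k j)) * gpol k (A.erase j) (x + k j)

theorem gpol_zpow (A : Finset ι) (hk : ∀ i ∈ A, 0 < k i) (x : ℝ) (hx : 0 < x) :
    gpol k A x = x * (x + ∑ i ∈ A, k i) ^ ((A.card : ℤ) - 1) := by
  unfold gpol
  split_ifs with h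
  · subst h; simp [hx.ne']
  · have : 1 ≤ A.card := Finset.card_pos.2 (Finset.nonempty_iff_ne_empty.2 h)
    obtain ⟨c, hc⟩ := Nat.exists_eq_add_of_le this
    rw [hc]
    rw [show 1 + c - 1 = c by omega, show ((1 + c : ℕ):ℤ) - 1 = c by push_cast; ring, zpow_natCast]

theorem gpol_erase_zpow (A : Finset ι) (hk : ∀ i ∈ A, 0 < k i) (x : ℝ) (hx : 0 < x) (j : ι) (hj : j ∈ A) :
    gpol k (A.erase j) (x + k j) = (x + k j) * (x + ∑ i ∈ A, k i) ^ ((A.card : ℤ) - 2) := by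
  rw [gpol_zpow _ _ (fun i hi => hk i (Finset.mem_of_mem_erase hi)) _ (by have := hk j hj; positivity),
    Finset.card_erase_of_mem hj, ← Finset.add_sum_erase A k hj, add_assoc]
  congr 2
  have : 1 ≤ A.card := Finset.card_pos.2 ⟨j, hj⟩
  rw [Nat.cast_sub this]; push_cast; ring

theorem G_expand (A : Finset ι) (hk : ∀ i ∈ A, 0 < k i) (x : ℝ) (hx : 0 < x) :
    (x + ∑ i ∈ A, k i) ^ ((A.card : ℤ) - 2) = gpol k A x / x^2 - hpol k A x := by
  have hs : 0 ≤ ∑ i ∈ A, k i := Finset.sum_nonneg fun i hi => (hk i hi).le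
  have hN : x + ∑ i ∈ A, k i ≠ 0 := by positivity
  have h1 : hpol k A x = (x + ∑ i ∈ A, k i) ^ ((A.card : ℤ) - 2) * (∑ i ∈ A, k i) / x := by
    unfold hpol
    rw [Finset.mul_sum, Finset.sum_div]
    refine Finset.sum_congr rfl fun j hj => ?_
    rw [gpol_erase_zpow k A hk x hx j hj]
    have := hk j hj
    have : x + k j ≠ 0 := by positivity
    field_simp
  rw [h1, gpol_zpow k A hk x hx, show (A.card : ℤ) - 1 = (A.card - 2) + 1 by ring, zpow_add_one₀ hN]
  field_simp
  ring

theorem L1 (K : Finset ι) (x y : ℝ) :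
    ∑ A ∈ K.powerset, hpol k A x * gpol k (K \ A) y =
      ∑ j ∈ K, k j / (x * (x + k j)) * gpol k (K.erase j) (x + k j + y) := by
  unfold hpol
  simp_rw [Finset.sum_mul]
  rw [sum_powerset_sum_mem]
  refine Finset.sum_congr rfl fun j hj => ?_
  rw [← hurwitz_binom, Finset.mul_sum]
  refine Finset.sum_congr rfl fun A hA => ?_
  have hjA : j ∉ A := fun h => by simpa using (Finset.mem_powerset.1 hA) h
  rw [Finset.erase_insert hjA, mul_assoc]
  congr 3
  ext t; simp; tauto

theorem powerset_reflect (K : Finset ι) (f : Finset ι → Finset ι → ℝ) :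
    ∑ A ∈ K.powerset, f A (K \ A) = ∑ A ∈ K.powerset, f (K \ A) A := by
  refine Finset.sum_bij' (fun A _ => K \ A) (fun A _ => K \ A) ?_ ?_ ?_ ?_ ?_
  · intro A _; simp
  · intro A _; simp
  · intro A hA; simpa using hA
  · intro A hA; simpa using hA
  · intro A hA
    have : K \ (K \ A) = A := by simpa using hA
    simp only [this]

theorem L2 (K : Finset ι) (x y : ℝ) :
    ∑ A ∈ K.powerset, gpol k A x * hpol k (K \ A) y =
      ∑ j ∈ K, k j / (y * (y + k j)) * gpol k (K.erase j) (x + y + k j) := by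
  rw [powerset_reflect K (fun A B => gpol k A x * hpol k B y)]
  simp_rw [mul_comm (gpol k _ x)]
  rw [L1]
  refine Finset.sum_congr rfl fun j hj => ?_
  congr 2; ring

theorem L3 (K : Finset ι) (x y : ℝ) :
    ∑ A ∈ K.powerset, hpol k A x * hpol k (K \ A) y =
      ∑ j ∈ K, k j / (x * (x + k j)) * ∑ i ∈ K.erase j, k i / (y * (y + k i)) *
        gpol k ((K.erase j).erase i) (x + k j + y + k i) := by
  conv_lhs => enter [2, A]; rw [hpol, Finset.sum_mul]
  rw [sum_powerset_sum_mem]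
  refine Finset.sum_congr rfl fun j hj => ?_
  rw [← L2, Finset.mul_sum]
  refine Finset.sum_congr rfl fun A hA => ?_
  have hjA : j ∉ A := fun h => by simpa using (Finset.mem_powerset.1 hA) h
  rw [Finset.erase_insert hjA, mul_assoc]
  congr 3
  ext t; simp; tauto

theorem subset_sum (K : Finset ι) (hk : ∀ i ∈ K, 0 < k i) (x y : ℝ) (hx : 0 < x) (hy : 0 < y) :
    ∑ A ∈ K.powerset, (x + ∑ i ∈ A, k i) ^ ((A.card : ℤ) - 2) *
        (y + ∑ i ∈ K \ A, k i) ^ (((K \ A).card : ℤ) - 2) =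
      (x + y + ∑ i ∈ K, k i) ^ ((K.card : ℤ) - 3) / (x * y) *
        ((x + y + ∑ i ∈ K, k i) * (x + y)^2 / (x * y) -
          ∑ j ∈ K, k j * (x + y + k j) * (1 / (x + k j) + 1 / (y + k j))) := by
  have hs : 0 ≤ ∑ i ∈ K, k i := Finset.sum_nonneg fun i hi => (hk i hi).le
  have hN : x + y + ∑ i ∈ K, k i ≠ 0 := by positivity
  have e0 : ∀ A ∈ K.powerset, (x + ∑ i ∈ A, k i) ^ ((A.card : ℤ) - 2) *
        (y + ∑ i ∈ K \ A, k i) ^ (((K \ A).card : ℤ) - 2) =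
      gpol k A x * gpol k (K \ A) y / (x^2 * y^2) - hpol k A x * gpol k (K \ A) y / y^2
      - gpol k A x * hpol k (K \ A) y / x^2 + hpol k A x * hpol k (K \ A) y := by
    intro A hA
    have hA := Finset.mem_powerset.1 hA
    rw [G_expand k A (fun i hi => hk i (hA hi)) x hx,
      G_expand k (K \ A) (fun i hi => hk i (Finset.sdiff_subset hi)) y hy]
    field_simp
    ring
  rw [Finset.sum_congr rfl e0, Finset.sum_add_distrib, Finset.sum_sub_distrib, Finset.sum_sub_distrib,
    ← Finset.sum_div, ← Finset.sum_div, ← Finset.sum_div, hurwitz_binom, L1, L2, L3]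
  set N := x + y + ∑ i ∈ K, k i with hNdef
  set P := N ^ ((K.card : ℤ) - 3) with hP
  set κ := ∑ i ∈ K, k i with hκ
  have g1 : gpol k K (x + y) = (x + y) * (P * N^2) := by
    rw [gpol_zpow k K hk _ (by positivity), hP, ← zpow_natCast N 2, ← zpow_add₀ hN]
    congr 2
    push_cast; ring
  have g2 : ∀ j ∈ K, gpol k (K.erase j) (x + y + k j) = (x + y + k j) * (P * N) := by
    intro j hj
    rw [gpol_erase_zpow k K hk _ (by positivity) j hj, hP, ← zpow_add_one₀ hN]
    congr 2
    ring
  have g3 : ∀ j ∈ K, ∀ i ∈ K.erase j, gpol k ((K.erase j).erase i) (x + k j + y + k i) =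
      (x + y + k j + k i) * P := by
    intro j hj i hi
    have := hk j hj
    rw [gpol_erase_zpow k (K.erase j) (fun i hi => hk i (Finset.mem_of_mem_erase hi)) _ (by positivity) i hi]
    rw [show x + k j + y + k i = x + y + k j + k i by ring,
      show x + k j + y + ∑ i ∈ K.erase j, k i = x + y + (k j + ∑ i ∈ K.erase j, k i) by ring,
      Finset.add_sum_erase K k hj, Finset.card_erase_of_mem hj,
      Nat.cast_sub (Finset.card_pos.2 ⟨j, hj⟩)]
    congr 2
    push_cast; ring
  set α := ∑ j ∈ K, k j / (x + k j) with hα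
  set β := ∑ j ∈ K, k j / (y + k j) with hβ
  set α2 := ∑ j ∈ K, k j ^ 2 / (x + k j) with hα2
  set β2 := ∑ j ∈ K, k j ^ 2 / (y + k j) with hβ2
  have t2 : ∑ j ∈ K, k j / (x * (x + k j)) * gpol k (K.erase j) (x + k j + y) =
      P * N / x * (y * α + κ) := by
    rw [hα, hκ, Finset.mul_sum, ← Finset.sum_add_distrib, Finset.mul_sum]
    refine Finset.sum_congr rfl fun j hj => ?_
    have := hk j hj
    rw [show x + k j + y = x + y + k j by ring, g2 j hj]
    field_simp
    ring
  have t3 : ∑ j ∈ K, k j / (y * (y + k j)) * gpol k (K.erase j) (x + y + k j) =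
      P * N / y * (x * β + κ) := by
    rw [hβ, hκ, Finset.mul_sum, ← Finset.sum_add_distrib, Finset.mul_sum]
    refine Finset.sum_congr rfl fun j hj => ?_
    have := hk j hj
    rw [g2 j hj]
    field_simp
    ring
  have t4 : ∑ j ∈ K, k j / (x * (x + k j)) * ∑ i ∈ K.erase j, k i / (y * (y + k i)) *
        gpol k ((K.erase j).erase i) (x + k j + y + k i) =
      P / (x * y) * (κ * α - α2 + κ * β - β2) := by
    have : ∀ j ∈ K, k j / (x * (x + k j)) * ∑ i ∈ K.erase j, k i / (y * (y + k i)) *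
        gpol k ((K.erase j).erase i) (x + k j + y + k i) =
        P / (x * y) * (κ * (k j / (x + k j)) - k j ^ 2 / (x + k j) + k j * β - k j ^ 2 / (y + k j)) := by
      intro j hj
      have hj0 := hk j hj
      have e1 : ∀ i ∈ K.erase j, k i / (y * (y + k i)) *
        gpol k ((K.erase j).erase i) (x + k j + y + k i) = P / y * (k i + (x + k j) * (k i / (y + k i))) := by
        intro i hi
        have := hk i (Finset.mem_of_mem_erase hi)
        rw [g3 j hj i hi]
        field_simp
        ring
      rw [Finset.sum_congr rfl e1, ← Finset.mul_sum, Finset.sum_add_distrib, ← Finset.mul_sum]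
      have e2 := Finset.add_sum_erase K k hj
      have e3 := Finset.add_sum_erase K (fun i => k i / (y + k i)) hj
      rw [eq_sub_of_add_eq' e2, eq_sub_of_add_eq' e3, ← hκ, ← hβ]
      field_simp
      ring
    rw [Finset.sum_congr rfl this, ← Finset.mul_sum]
    congr 1
    rw [Finset.sum_sub_distrib, Finset.sum_add_distrib, Finset.sum_sub_distrib, ← Finset.mul_sum,
      ← Finset.sum_mul]
  have t5 : ∑ j ∈ K, k j * (x + y + k j) * (1 / (x + k j) + 1 / (y + k j)) =
      (x + y) * (α + β) + α2 + β2 := by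
    rw [hα, hβ, hα2, hβ2, ← Finset.sum_add_distrib, Finset.mul_sum, ← Finset.sum_add_distrib,
      ← Finset.sum_add_distrib]
    refine Finset.sum_congr rfl fun j hj => ?_
    have := hk j hj
    field_simp
    ring
  rw [g1, t2, t3, t4, t5]
  clear_value P α β α2 β2
  have : κ = N - x - y := by rw [hNdef]; ring
  rw [this]
  clear_value N
  field_simp
  ring

end subset_sum

end Hur

namespace Hur
open Finset

/-- The incomplete Abel-type sum. -/
noncomputable def YY (p q : ℕ) : ℝ := ∑ r ∈ Ico 1 p, uu r * uu (p - r) / ((q:ℝ) + r)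

theorem pair_Y (p q : ℕ) (hp : 1 ≤ p) (hq : 1 ≤ q) :
    aa q * YY p q + aa p * YY q p = uu (p + q) - 2 * (uu p * uu q) := by
  have h := pair_ident p q hp hq
  have e : ∀ p q : ℕ, 1 ≤ p → 1 ≤ q → aa q * ∑ r ∈ range p, uu r * uu (p - r) / ((q:ℝ) + r) =
      uu p * uu q + aa q * YY p q := by
    intro p q hp hq
    rw [Finset.range_eq_Ico, Finset.sum_eq_sum_Ico_succ_bot (by omega)]
    have : (q:ℝ) ≠ 0 := by positivity
    simp only [YY, aa]
    have : uu 0 = 1 := by simp [uu]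
    simp only [this, Nat.cast_zero, add_zero, Nat.sub_zero, zero_add]
    field_simp
  have e1 := e p q hp hq
  have e2 := e q p hq hp
  unfold aa at *
  rw [e1, e2] at h
  linarith

theorem YY_reflect (p q : ℕ) :
    ∑ r ∈ Ico 1 p, uu r * uu (p - r) * (1 / ((r:ℝ) + q) + 1 / (((p - r : ℕ):ℝ) + q)) = 2 * YY p q := by
  simp_rw [mul_add, Finset.sum_add_distrib]
  have h1 : ∑ r ∈ Ico 1 p, uu r * uu (p - r) * (1 / (((p - r : ℕ):ℝ) + q)) = YY p q := by
    unfold YY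
    refine Finset.sum_bij' (fun r _ => p - r) (fun r _ => p - r) ?_ ?_ ?_ ?_ ?_
    · intro r hr; simp only [mem_Ico] at hr ⊢; omega
    · intro r hr; simp only [mem_Ico] at hr ⊢; omega
    · intro r hr; simp only [mem_Ico] at hr ⊢; omega
    · intro r hr; simp only [mem_Ico] at hr ⊢; omega
    · intro r hr
      simp only [mem_Ico] at hr
      rw [show p - (p - r) = r by omega]
      ring
  rw [h1, two_mul]
  congr 1
  unfold YY
  refine Finset.sum_congr rfl fun r _ => by ring

section final
variable {ι : Type*} [DecidableEq ι] (k : ι → ℕ)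

theorem cut_sum (K : Finset ι) (hk : ∀ i ∈ K, 1 ≤ k i) (p : ℕ) :
    ∑ r ∈ Ico 1 p, aa r * aa (p - r) * ∑ A ∈ K.powerset,
        ((r:ℝ) + ∑ i ∈ A, (k i:ℝ)) ^ ((A.card : ℤ) - 2) *
        (((p - r : ℕ):ℝ) + ∑ i ∈ K \ A, (k i:ℝ)) ^ (((K \ A).card : ℤ) - 2) =
      ((p:ℝ) + ∑ i ∈ K, (k i:ℝ)) ^ ((K.card : ℤ) - 3) *
        (((p:ℝ) + ∑ i ∈ K, (k i:ℝ)) * (p:ℝ)^2 * (∑ r ∈ Ico 1 p, (uu r / r) * (uu (p - r) / (p - r : ℕ)))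
          - 2 * ∑ j ∈ K, (k j : ℝ) * ((p:ℝ) + k j) * YY p (k j)) := by
  have e : ∀ r ∈ Ico 1 p, aa r * aa (p - r) * ∑ A ∈ K.powerset,
        ((r:ℝ) + ∑ i ∈ A, (k i:ℝ)) ^ ((A.card : ℤ) - 2) *
        (((p - r : ℕ):ℝ) + ∑ i ∈ K \ A, (k i:ℝ)) ^ (((K \ A).card : ℤ) - 2) =
      ((p:ℝ) + ∑ i ∈ K, (k i:ℝ)) ^ ((K.card : ℤ) - 3) *
        (((p:ℝ) + ∑ i ∈ K, (k i:ℝ)) * (p:ℝ)^2 * ((uu r / r) * (uu (p - r) / (p - r : ℕ)))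
          - ∑ j ∈ K, (k j : ℝ) * ((p:ℝ) + k j) *
            (uu r * uu (p - r) * (1 / ((r:ℝ) + k j) + 1 / (((p - r : ℕ):ℝ) + k j)))) := by
    intro r hr
    simp only [mem_Ico] at hr
    have h1 : (0:ℝ) < r := by exact_mod_cast hr.1
    have h2 : (0:ℝ) < (p - r : ℕ) := by exact_mod_cast (by omega)
    have h3 : (r:ℝ) + (p - r : ℕ) = p := by exact_mod_cast (by omega)
    rw [subset_sum (fun i => (k i : ℝ)) K (fun i hi => by exact_mod_cast hk i hi) _ _ h1 h2, h3]
    have e2 : ∑ j ∈ K, (k j : ℝ) * ((p:ℝ) + k j) *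
            (uu r * uu (p - r) * (1 / ((r:ℝ) + k j) + 1 / (((p - r : ℕ):ℝ) + k j))) =
        uu r * uu (p - r) * ∑ j ∈ K, (k j : ℝ) * ((p:ℝ) + k j) *
            (1 / ((r:ℝ) + k j) + 1 / (((p - r : ℕ):ℝ) + k j)) := by
      rw [Finset.mul_sum]
      refine Finset.sum_congr rfl fun j _ => by ring
    rw [e2, aa, aa]
    field_simp
  rw [Finset.sum_congr rfl e, ← Finset.mul_sum, Finset.sum_sub_distrib, ← Finset.mul_sum,
    Finset.sum_comm, Finset.mul_sum (a := (2:ℝ))]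
  congr 2
  refine Finset.sum_congr rfl fun j _ => ?_
  rw [← Finset.mul_sum, YY_reflect]
  ring

theorem sum_erase_swap (C : Finset ι) (f : ι → ι → ℝ) :
    ∑ i ∈ C, ∑ j ∈ C.erase i, f i j = ∑ i ∈ C, ∑ j ∈ C.erase i, f j i := by
  rw [Finset.sum_comm' (t' := C) (s' := fun r => C.erase r)]
  intro x y; simp only [mem_erase]; tauto

theorem block_algebra (C : Finset ι) (hk : ∀ i ∈ C, 1 ≤ k i) (n : ℝ) (hn : n = ∑ i ∈ C, (k i : ℝ))
    (hC : C.Nonempty) :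
    ∑ i ∈ C, (k i : ℝ) * ((∏ j ∈ C.erase i, aa (k j)) *
      ∑ r ∈ Ico 1 (k i), aa r * aa (k i - r) * ∑ A ∈ (C.erase i).powerset,
        ((r:ℝ) + ∑ i ∈ A, (k i:ℝ)) ^ ((A.card : ℤ) - 2) *
        (((k i - r : ℕ):ℝ) + ∑ l ∈ (C.erase i) \ A, (k l:ℝ)) ^ ((((C.erase i) \ A).card : ℤ) - 2)) +
    ∑ i ∈ C, ∑ j ∈ C.erase i, (k i : ℝ) * k j * (n ^ ((C.card : ℤ) - 4) * (aa (k i + k j) *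
      ∏ l ∈ (C.erase i).erase j, aa (k l))) =
    2 * (n + C.card - 2) * (n ^ ((C.card : ℤ) - 3) * ∏ i ∈ C, aa (k i)) := by
  have ha : ∀ i ∈ C, aa (k i) ≠ 0 := fun i hi => (aa_pos _ (hk i hi)).ne'
  have hk0 : ∀ i ∈ C, (0:ℝ) < k i := fun i hi => by exact_mod_cast hk i hi
  have hn0 : 0 < n := by
    rw [hn]; exact Finset.sum_pos hk0 hC
  set Q := n ^ ((C.card : ℤ) - 4) with hQ
  set Pr := ∏ i ∈ C, aa (k i) with hPr
  have hP1 : ∀ i ∈ C, ∏ j ∈ C.erase i, aa (k j) = Pr / aa (k i) := by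
    intro i hi
    rw [eq_div_iff (ha i hi), Finset.prod_erase_mul C _ hi]
  have hP2 : ∀ i ∈ C, ∀ j ∈ C.erase i, ∏ l ∈ (C.erase i).erase j, aa (k l) = Pr / aa (k i) / aa (k j) := by
    intro i hi j hj
    rw [eq_div_iff (ha j (Finset.mem_of_mem_erase hj)), Finset.prod_erase_mul _ _ hj, hP1 i hi]
  have hcut : ∀ i ∈ C, (k i : ℝ) * ((∏ j ∈ C.erase i, aa (k j)) *
      ∑ r ∈ Ico 1 (k i), aa r * aa (k i - r) * ∑ A ∈ (C.erase i).powerset,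
        ((r:ℝ) + ∑ i ∈ A, (k i:ℝ)) ^ ((A.card : ℤ) - 2) *
        (((k i - r : ℕ):ℝ) + ∑ l ∈ (C.erase i) \ A, (k l:ℝ)) ^ ((((C.erase i) \ A).card : ℤ) - 2)) =
      Q * Pr * (2 * n * ((k i : ℝ) - 1)) +
      ∑ j ∈ C.erase i, Q * Pr * (- 2 * ((k i : ℝ) * k j * (k i + k j) * YY (k i) (k j) / aa (k i))) := by
    intro i hi
    rw [cut_sum k (C.erase i) (fun j hj => hk j (Finset.mem_of_mem_erase hj)) (k i), hP1 i hi,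
      Finset.add_sum_erase C (fun j => (k j : ℝ)) hi, ← hn, Finset.card_erase_of_mem hi,
      Nat.cast_sub (Finset.card_pos.2 hC), show (C.card : ℤ) - (1:ℕ) - 3 = C.card - 4 by push_cast; ring,
      ← hQ]
    have hX := abel_X (k i) (hk i hi)
    have hai := ha i hi
    rw [← Finset.mul_sum, ← Finset.mul_sum, ← Finset.sum_div]
    have e2 : ∑ j ∈ C.erase i, (k i : ℝ) * k j * (k i + k j) * YY (k i) (k j) =
        k i * ∑ j ∈ C.erase i, (k j : ℝ) * (k i + k j) * YY (k i) (k j) := by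
      rw [Finset.mul_sum]
      refine Finset.sum_congr rfl fun j _ => by ring
    rw [e2]
    set X := ∑ r ∈ Ico 1 (k i), (uu r / r) * (uu (k i - r) / (k i - r : ℕ))
    set Y := ∑ j ∈ C.erase i, (k j : ℝ) * (k i + k j) * YY (k i) (k j)
    have : (k i : ℝ) * (Pr / aa (k i) * (Q * (n * (k i : ℝ)^2 * X - 2 * Y))) =
      Q * Pr * (n * ((k i : ℝ)^3 * X) / aa (k i)) + Q * Pr * (-2 * (k i * Y / aa (k i))) := by ring
    rw [this, hX]
    field_simp
  have hjoin : ∀ i ∈ C, ∀ j ∈ C.erase i, (k i : ℝ) * k j * (Q * (aa (k i + k j) *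
      ∏ l ∈ (C.erase i).erase j, aa (k l))) =
      Q * Pr * ((k i : ℝ) * k j * aa (k i + k j) / (aa (k i) * aa (k j))) := by
    intro i hi j hj
    rw [hP2 i hi j hj]
    have := ha i hi
    have := ha j (Finset.mem_of_mem_erase hj)
    field_simp
  rw [Finset.sum_congr rfl hcut, Finset.sum_congr rfl fun i hi => Finset.sum_congr rfl (hjoin i hi),
    Finset.sum_add_distrib, add_assoc, ← Finset.sum_add_distrib]
  simp_rw [← Finset.sum_add_distrib, ← mul_add, ← Finset.mul_sum]
  set f : ι → ι → ℝ := fun i j => (-2 * ((k i : ℝ) * k j * (k i + k j) * YY (k i) (k j) / aa (k i)) +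
    (k i : ℝ) * k j * aa (k i + k j) / (aa (k i) * aa (k j))) with hf
  have hD : ∑ i ∈ C, ∑ j ∈ C.erase i, f i j = ∑ i ∈ C, ∑ j ∈ C.erase i, 2 * ((k i : ℝ) + k j) := by
    have h2 : ∑ i ∈ C, ∑ j ∈ C.erase i, (f i j + f j i) = ∑ i ∈ C, ∑ j ∈ C.erase i, 4 * ((k i : ℝ) + k j) := by
      refine Finset.sum_congr rfl fun i hi => Finset.sum_congr rfl fun j hj => ?_
      have hjC := Finset.mem_of_mem_erase hj
      have h := pair_Y (k i) (k j) (hk i hi) (hk j hjC)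
      have h1 := ha i hi
      have h2 := ha j hjC
      have hi0 := hk0 i hi
      have hj0 := hk0 j hjC
      have : f i j + f j i = 2 * ((k i : ℝ) * k j * (k i + k j)) / (aa (k i) * aa (k j)) *
        (uu (k i + k j) - (aa (k j) * YY (k i) (k j) + aa (k i) * YY (k j) (k i))) := by
        simp only [hf, Nat.add_comm (k j) (k i)]
        have : aa (k i + k j) = (k i + k j) * uu (k i + k j) := by unfold aa; push_cast; ring
        rw [this]
        field_simp
        ring
      rw [this, h]
      have hu1 := (uu_pos (k i)).ne'
      have hu2 := (uu_pos (k j)).ne'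
      unfold aa
      field_simp
      ring
    simp_rw [Finset.sum_add_distrib] at h2
    rw [← sum_erase_swap C f, ← Finset.sum_add_distrib] at h2
    have h3 : ∑ i ∈ C, ∑ j ∈ C.erase i, 4 * ((k i : ℝ) + k j) = 2 * ∑ i ∈ C, ∑ j ∈ C.erase i, 2 * ((k i : ℝ) + k j) := by
      simp_rw [← Finset.mul_sum]; ring
    rw [h3, Finset.sum_add_distrib] at h2
    linarith
  change ∑ i ∈ C, (Q * Pr * (2 * n * ((k i : ℝ) - 1)) + Q * Pr * ∑ j ∈ C.erase i, f i j) = _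
  rw [Finset.sum_add_distrib, ← Finset.mul_sum, ← Finset.mul_sum, ← Finset.mul_sum, hD]
  have hS : ∑ i ∈ C, ∑ j ∈ C.erase i, 2 * ((k i : ℝ) + k j) = 4 * n * (C.card - 1) := by
    have : ∀ i ∈ C, ∑ j ∈ C.erase i, 2 * ((k i : ℝ) + k j) = 2 * ((C.card - 1) * k i + (n - k i)) := by
      intro i hi
      rw [← Finset.mul_sum, Finset.sum_add_distrib, Finset.sum_const, Finset.card_erase_of_mem hi,
        nsmul_eq_mul, Nat.cast_sub (Finset.card_pos.2 hC),
        eq_sub_of_add_eq' (Finset.add_sum_erase C (fun j => (k j : ℝ)) hi), ← hn]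
      push_cast; ring
    rw [Finset.sum_congr rfl this, ← Finset.mul_sum, Finset.sum_add_distrib, ← Finset.mul_sum,
      Finset.sum_sub_distrib, ← hn, Finset.sum_const, nsmul_eq_mul]
    ring
  rw [hS, Finset.sum_sub_distrib, ← hn, Finset.sum_const, nsmul_eq_mul,
    show (C.card : ℤ) - 3 = C.card - 4 + 1 by ring, zpow_add_one₀ hn0.ne', ← hQ]
  ring

end final
end Hur

namespace Hur
open Finset Equiv

section cyc
variable {α : Type*} [Fintype α] [DecidableEq α]

/-- The cycle of `x` as a finset. -/
def cyc (σ : Perm α) (x : α) : Finset α := univ.filter (fun y => σ.SameCycle x y)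

theorem mem_cyc {σ : Perm α} {x y : α} : y ∈ cyc σ x ↔ σ.SameCycle x y := by simp [cyc]

theorem self_mem_cyc (σ : Perm α) (x : α) : x ∈ cyc σ x := mem_cyc.2 (Equiv.Perm.SameCycle.refl _ _)

theorem cyc_eq_iff {σ : Perm α} {x y : α} : cyc σ x = cyc σ y ↔ σ.SameCycle x y := by
  constructor
  · intro h
    have := self_mem_cyc σ y
    rw [← h] at this
    exact mem_cyc.1 this
  · intro h
    ext z
    rw [mem_cyc, mem_cyc]
    exact ⟨fun h2 => h.symm.trans h2, fun h2 => h.trans h2⟩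

theorem cyc_eq_of_mem {σ : Perm α} {x y : α} (h : y ∈ cyc σ x) : cyc σ y = cyc σ x :=
  (cyc_eq_iff.2 (mem_cyc.1 h)).symm

theorem orbit_finset (f : Perm α) (x : α) (j : ℕ) (hj : 0 < j) (h : (f^j) x = x) :
    cyc f x = (range j).image (fun i => (f^i) x) := by
  ext u
  simp only [mem_cyc, mem_image, mem_range]
  constructor
  · intro hu
    obtain ⟨i, hi⟩ := hu.exists_nat_pow_eq
    refine ⟨i % j, Nat.mod_lt _ hj, ?_⟩
    rw [← hi]
    conv_rhs => rw [← Nat.mod_add_div i j]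
    rw [pow_add, Perm.mul_apply]
    congr 1
    have : ∀ m : ℕ, (f ^ (j * m)) x = x := by
      intro m
      induction m with
      | zero => simp
      | succ m ih => rw [Nat.mul_succ, pow_add, Perm.mul_apply, h, ih]
    exact (this _).symm
  · rintro ⟨i, _, rfl⟩
    exact ⟨i, by simp⟩

/-- The length of the cycle of `x`. -/
noncomputable def per (σ : Perm α) (x : α) : ℕ := Function.minimalPeriod σ x

theorem per_pos (σ : Perm α) (x : α) : 0 < per σ x :=
  Function.minimalPeriod_pos_of_mem_periodicPts (Function.Injective.mem_periodicPts σ.injective x)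

theorem pow_per (σ : Perm α) (x : α) : (σ ^ per σ x) x = x := by
  have := Function.isPeriodicPt_minimalPeriod σ x
  rw [Perm.coe_pow]; exact this

theorem pow_inj (σ : Perm α) (x : α) {i j : ℕ} (hi : i < per σ x) (hj : j < per σ x)
    (h : (σ ^ i) x = (σ ^ j) x) : i = j := by
  rw [Perm.coe_pow, Perm.coe_pow] at h
  exact Function.iterate_injOn_Iio_minimalPeriod hi hj h

theorem cyc_per (σ : Perm α) (x : α) : cyc σ x = (range (per σ x)).image (fun i => (σ^i) x) :=
  orbit_finset σ x _ (per_pos σ x) (pow_per σ x)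

theorem card_cyc (σ : Perm α) (x : α) : (cyc σ x).card = per σ x := by
  rw [cyc_per, Finset.card_image_of_injOn, card_range]
  intro i hi j hj h
  exact pow_inj σ x (by simpa using hi) (by simpa using hj) h

theorem cut_pows (σ : Perm α) (x : α) (j : ℕ) (hj : 0 < j) (hjk : j < per σ x) :
    let σ' := swap x ((σ^j) x) * σ
    (∀ i < j, (σ' ^ i) x = (σ ^ i) x) ∧ (σ' ^ j) x = x ∧
    (∀ i < per σ x - j, (σ' ^ i) ((σ^j) x) = (σ ^ (i + j)) x) ∧
      (σ' ^ (per σ x - j)) ((σ^j) x) = (σ^j) x := by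
  intro σ'
  have s1 : ∀ u, σ' u = swap x ((σ^j) x) (σ u) := fun u => rfl
  have h1 : ∀ i < j, (σ' ^ i) x = (σ ^ i) x := by
    intro i
    induction i with
    | zero => simp
    | succ i ih =>
      intro hi
      rw [pow_succ', Perm.mul_apply, ih (by omega), s1, ← Perm.mul_apply σ, ← pow_succ',
        swap_apply_of_ne_of_ne]
      · intro h
        have := pow_inj σ x (i := i+1) (j := 0) (by omega) (by omega) (by simpa using h)
        omega
      · intro h
        have := pow_inj σ x (i := i+1) (j := j) (by omega) (by omega) h
        omega
  have h2 : ∀ i < per σ x - j, (σ' ^ i) ((σ^j) x) = (σ ^ (i + j)) x := by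
    intro i
    induction i with
    | zero => simp
    | succ i ih =>
      intro hi
      rw [pow_succ', Perm.mul_apply, ih (by omega), s1, ← Perm.mul_apply σ, ← pow_succ',
        swap_apply_of_ne_of_ne, show i + 1 + j = i + j + 1 by omega]
      · intro h
        have := pow_inj σ x (i := i+j+1) (j := 0) (by omega) (by omega) (by simpa using h)
        omega
      · intro h
        have := pow_inj σ x (i := i+j+1) (j := j) (by omega) (by omega) h
        omega
  refine ⟨h1, ?_, h2, ?_⟩
  · obtain ⟨m, rfl⟩ := Nat.exists_eq_succ_of_ne_zero hj.ne'
    rw [Nat.succ_eq_add_one, pow_succ' σ', Perm.mul_apply, h1 m (by omega), s1, ← Perm.mul_apply σ,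
      ← pow_succ', swap_apply_right]
  · obtain ⟨m, hm⟩ := Nat.exists_eq_succ_of_ne_zero (show per σ x - j ≠ 0 by omega)
    rw [hm, Nat.succ_eq_add_one, pow_succ' σ', Perm.mul_apply, h2 m (by omega), s1, ← Perm.mul_apply σ,
      ← pow_succ', show m + j + 1 = per σ x by omega, pow_per, swap_apply_left]

theorem cut_cyc (σ : Perm α) (x : α) (j : ℕ) (hj : 0 < j) (hjk : j < per σ x) :
    let σ' := swap x ((σ^j) x) * σ
    (cyc σ' x).card = j ∧ (cyc σ' ((σ^j) x)).card = per σ x - j ∧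
    Disjoint (cyc σ' x) (cyc σ' ((σ^j) x)) ∧ cyc σ x = cyc σ' x ∪ cyc σ' ((σ^j) x) := by
  intro σ'
  obtain ⟨h1, h2, h3, h4⟩ := cut_pows σ x j hj hjk
  have e1 : cyc σ' x = (range j).image (fun i => (σ^i) x) := by
    rw [orbit_finset σ' x j hj h2]
    exact Finset.image_congr (fun i hi => h1 i (by simpa using hi))
  have e2 : cyc σ' ((σ^j) x) = (Ico j (per σ x)).image (fun i => (σ^i) x) := by
    rw [orbit_finset σ' _ (per σ x - j) (by omega) h4]
    ext u
    simp only [mem_image, mem_range, mem_Ico]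
    constructor
    · rintro ⟨i, hi, rfl⟩
      exact ⟨i + j, by omega, (h3 i hi).symm⟩
    · rintro ⟨i, hi, rfl⟩
      refine ⟨i - j, by omega, ?_⟩
      have := h3 (i - j) (by omega)
      rw [Nat.sub_add_cancel hi.1] at this
      exact this
  have hinj : Set.InjOn (fun i => (σ^i) x) (range (per σ x)) := by
    intro i hi j hj h
    exact pow_inj σ x (by simpa using hi) (by simpa using hj) h
  refine ⟨?_, ?_, ?_, ?_⟩
  · rw [e1, Finset.card_image_of_injOn, card_range]
    exact hinj.mono (by intro i; simp; omega)
  · rw [e2, Finset.card_image_of_injOn, Nat.card_Ico]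
    exact hinj.mono (by intro i; simp)
  · rw [e1, e2, Finset.disjoint_left]
    intro u hu hu2
    simp only [mem_image, mem_range, mem_Ico] at hu hu2
    obtain ⟨i, hi, rfl⟩ := hu
    obtain ⟨i', hi', h⟩ := hu2
    have := pow_inj σ x (by omega) (by omega) h
    omega
  · rw [e1, e2, cyc_per, ← Finset.image_union]
    congr 1
    ext i; simp; omega

theorem exists_pow_of_same {σ : Perm α} {x y : α} (h : σ.SameCycle x y) (hne : x ≠ y) :
    ∃ j, 0 < j ∧ j < per σ x ∧ y = (σ^j) x := by
  have := mem_cyc.2 h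
  rw [cyc_per] at this
  simp only [mem_image, mem_range] at this
  obtain ⟨j, hj, rfl⟩ := this
  refine ⟨j, ?_, hj, rfl⟩
  rcases Nat.eq_zero_or_pos j with rfl | h
  · simp at hne
  · exact h

theorem cut_main {σ : Perm α} {x y : α} (h : σ.SameCycle x y) (hne : x ≠ y) :
    Disjoint (cyc (swap x y * σ) x) (cyc (swap x y * σ) y) ∧
      cyc σ x = cyc (swap x y * σ) x ∪ cyc (swap x y * σ) y := by
  obtain ⟨j, hj, hjk, rfl⟩ := exists_pow_of_same h hne
  exact (cut_cyc σ x j hj hjk).2.2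

theorem cut_not_same {σ : Perm α} {x y : α} (h : σ.SameCycle x y) (hne : x ≠ y) :
    ¬ (swap x y * σ).SameCycle x y := by
  intro h2
  have := (cut_main h hne).1
  rw [← cyc_eq_iff.2 h2, Finset.disjoint_left] at this
  exact this (self_mem_cyc _ _) (self_mem_cyc _ _)

theorem cyc_other {σ : Perm α} {x y u : α} (hx : ¬ σ.SameCycle u x) (hy : ¬ σ.SameCycle u y) :
    cyc (swap x y * σ) u = cyc σ u := by
  have h : ∀ i : ℕ, ((swap x y * σ) ^ i) u = (σ ^ i) u := by
    intro i
    induction i with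
    | zero => simp
    | succ i ih =>
      rw [pow_succ', Perm.mul_apply, ih, Perm.mul_apply, ← Perm.mul_apply σ, ← pow_succ']
      rw [swap_apply_of_ne_of_ne]
      · intro h; exact hx ⟨((i+1 : ℕ) : ℤ), by rw [zpow_natCast]; exact h⟩
      · intro h; exact hy ⟨((i+1 : ℕ) : ℤ), by rw [zpow_natCast]; exact h⟩
  rw [orbit_finset (swap x y * σ) u (per σ u) (per_pos _ _) (by rw [h, pow_per]), cyc_per σ u]
  exact Finset.image_congr (fun i _ => h i)

theorem join_same {σ : Perm α} {x y : α} (h : ¬ σ.SameCycle x y) :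
    (swap x y * σ).SameCycle x y := by
  have h1 : ∀ i < per σ x, ((swap x y * σ) ^ i) x = (σ ^ i) x := by
    intro i
    induction i with
    | zero => simp
    | succ i ih =>
      intro hi
      rw [pow_succ', Perm.mul_apply, ih (by omega), Perm.mul_apply, ← Perm.mul_apply σ, ← pow_succ',
        swap_apply_of_ne_of_ne]
      · intro h
        have := pow_inj σ x (i := i+1) (j := 0) (by omega) (by omega) (by simpa using h)
        omega
      · intro h2
        exact h ⟨((i+1 : ℕ) : ℤ), by rw [zpow_natCast]; exact h2⟩
  refine ⟨(per σ x : ℕ), ?_⟩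
  rw [zpow_natCast]
  obtain ⟨m, hm⟩ := Nat.exists_eq_succ_of_ne_zero (per_pos σ x).ne'
  rw [hm, Nat.succ_eq_add_one, pow_succ', Perm.mul_apply, h1 m (by omega), Perm.mul_apply,
    ← Perm.mul_apply σ, ← pow_succ', show m + 1 = per σ x by omega, pow_per, swap_apply_left]

theorem join_main {σ : Perm α} {x y : α} (h : ¬ σ.SameCycle x y) :
    cyc (swap x y * σ) x = cyc σ x ∪ cyc σ y := by
  have hne : x ≠ y := by rintro rfl; exact h (Perm.SameCycle.refl _ _)
  have := (cut_main (join_same h) hne).2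
  rwa [← mul_assoc, swap_mul_self, one_mul] at this

theorem sum_cut (σ : Perm α) (x : α) (f : ℕ → ℕ → ℝ) :
    ∑ y ∈ (cyc σ x).erase x, f (cyc (swap x y * σ) x).card (cyc (swap x y * σ) y).card =
      ∑ r ∈ Ico 1 (cyc σ x).card, f r ((cyc σ x).card - r) := by
  have e : (cyc σ x).erase x = (Ico 1 (per σ x)).image (fun i => (σ^i) x) := by
    ext y
    simp only [mem_erase, mem_cyc, mem_image, mem_Ico]
    constructor
    · rintro ⟨h1, h2⟩
      obtain ⟨j, hj, hjk, rfl⟩ := exists_pow_of_same h2 h1.symm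
      exact ⟨j, ⟨hj, hjk⟩, rfl⟩
    · rintro ⟨j, hj, rfl⟩
      refine ⟨?_, ⟨j, by simp⟩⟩
      intro h
      have := pow_inj σ x (i := j) (j := 0) (by omega) (by omega) (by simpa using h)
      omega
  rw [e, Finset.sum_image, card_cyc]
  · refine Finset.sum_congr rfl fun j hj => ?_
    simp only [mem_Ico] at hj
    obtain ⟨h1, h2, -⟩ := cut_cyc σ x j hj.1 hj.2
    rw [h1, h2]
  · intro i hi j hj h
    simp only [coe_Ico, Set.mem_Ico] at hi hj
    exact pow_inj σ x (by omega) (by omega) h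

end cyc
end Hur

namespace Hur
open Finset Equiv

section blk
variable {α : Type*} [Fintype α] [DecidableEq α]

/-- `S` is a union of cycles of `σ`. -/
def Inv (σ : Perm α) (S : Finset α) : Prop := ∀ u ∈ S, ∀ v, σ.SameCycle u v → v ∈ S

/-- The cycles of `σ` meeting `S`. -/
def cycs (σ : Perm α) (S : Finset α) : Finset (Finset α) := S.image (cyc σ)

theorem mem_cycs {σ : Perm α} {S : Finset α} {c : Finset α} :
    c ∈ cycs σ S ↔ ∃ u ∈ S, cyc σ u = c := by simp [cycs]

theorem cyc_mem_cycs {σ : Perm α} {S : Finset α} {u : α} (h : u ∈ S) : cyc σ u ∈ cycs σ S :=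
  mem_cycs.2 ⟨u, h, rfl⟩

theorem cycs_biUnion {σ : Perm α} {K : Finset (Finset α)} (h : ∀ c ∈ K, ∃ u, cyc σ u = c) :
    cycs σ (K.biUnion id) = K := by
  ext c
  simp only [mem_cycs, mem_biUnion, id]
  constructor
  · rintro ⟨u, ⟨c', h1, h2⟩, rfl⟩
    obtain ⟨v, rfl⟩ := h c' h1
    rwa [cyc_eq_of_mem h2]
  · intro hc
    obtain ⟨u, rfl⟩ := h c hc
    exact ⟨u, ⟨_, hc, self_mem_cyc σ u⟩, rfl⟩

theorem Inv.cyc_sub {σ : Perm α} {A : Finset α} (h : Inv σ A) {u : α} (hu : u ∈ A) :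
    cyc σ u ⊆ A := fun v hv => h u hu v (mem_cyc.1 hv)

theorem Inv.biUnion_cycs {σ : Perm α} {A : Finset α} (h : Inv σ A) : (cycs σ A).biUnion id = A := by
  ext v
  simp only [mem_cycs, mem_biUnion, id]
  constructor
  · rintro ⟨c, ⟨u, hu, rfl⟩, hv⟩
    exact h.cyc_sub hu hv
  · intro hv
    exact ⟨_, ⟨v, hv, rfl⟩, self_mem_cyc σ v⟩

theorem Inv.mem_of_cyc {σ : Perm α} {A : Finset α} (h : Inv σ A) {u : α} :
    cyc σ u ∈ cycs σ A ↔ u ∈ A := by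
  constructor
  · intro hu
    obtain ⟨v, hv, e⟩ := mem_cycs.1 hu
    exact h v hv u (cyc_eq_iff.1 e)
  · exact cyc_mem_cycs

theorem inv_biUnion {σ : Perm α} {K : Finset (Finset α)} (h : ∀ c ∈ K, ∃ u, cyc σ u = c) :
    Inv σ (K.biUnion id) := by
  intro u hu v huv
  simp only [mem_biUnion, id] at hu ⊢
  obtain ⟨c, hc, hu⟩ := hu
  obtain ⟨w, rfl⟩ := h c hc
  exact ⟨_, hc, mem_cyc.2 ((mem_cyc.1 hu).trans huv)⟩

theorem Inv.sdiff {σ : Perm α} {S A : Finset α} (hS : Inv σ S) (hA : Inv σ A) : Inv σ (S \ A) := by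
  intro u hu v huv
  simp only [mem_sdiff] at hu ⊢
  exact ⟨hS u hu.1 v huv, fun hv => hu.2 (hA v hv u huv.symm)⟩

theorem cycs_sdiff {σ : Perm α} {S A : Finset α} (hA : Inv σ A) :
    cycs σ (S \ A) = cycs σ S \ cycs σ A := by
  ext c
  simp only [mem_sdiff, mem_cycs (S := S), mem_cycs (S := S \ A)]
  constructor
  · rintro ⟨u, ⟨h1, h2⟩, rfl⟩
    exact ⟨⟨u, h1, rfl⟩, fun h => h2 (hA.mem_of_cyc.1 h)⟩
  · rintro ⟨⟨u, h1, rfl⟩, h2⟩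
    exact ⟨u, ⟨h1, fun h => h2 (hA.mem_of_cyc.2 h)⟩, rfl⟩

theorem Inv.sum_cyc {σ : Perm α} {S : Finset α} (h : Inv σ S) (f : Finset α → ℝ) :
    ∑ x ∈ S, f (cyc σ x) = ∑ c ∈ cycs σ S, (c.card : ℝ) * f c := by
  rw [Finset.sum_comp f (cyc σ)]
  refine Finset.sum_congr rfl fun c hc => ?_
  rw [nsmul_eq_mul]
  congr 2
  obtain ⟨u, hu, rfl⟩ := mem_cycs.1 hc
  congr 1
  ext v
  rw [mem_filter, mem_cyc]
  constructor
  · rintro ⟨_, h2⟩; exact (cyc_eq_iff.1 h2).symm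
  · intro h2; exact ⟨h u hu v h2, (cyc_eq_iff.2 h2).symm⟩

theorem Inv.card {σ : Perm α} {S : Finset α} (h : Inv σ S) :
    (S.card : ℝ) = ∑ c ∈ cycs σ S, (c.card : ℝ) := by
  have := h.sum_cyc (fun _ => 1)
  simpa using this

/-- Weight of a block. -/
noncomputable def G (σ : Perm α) (S : Finset α) : ℝ :=
  (S.card:ℝ)^(((cycs σ S).card:ℤ) - 3) * ∏ c ∈ cycs σ S, aa c.card

theorem Inv.G_eq {σ : Perm α} {S : Finset α} (h : Inv σ S) :
    G σ S = (∑ c ∈ cycs σ S, (c.card : ℝ))^(((cycs σ S).card:ℤ) - 3) * ∏ c ∈ cycs σ S, aa c.card := by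
  rw [G, h.card]

theorem inv_cut {σ : Perm α} {S : Finset α} (hS : Inv σ S) {x y : α} (hx : x ∈ S) (hy : y ∈ S) :
    Inv (swap x y * σ) S := by
  intro u hu v huv
  by_cases h : σ.SameCycle x y
  · by_cases hne : x = y
    · subst hne
      rw [swap_self] at huv
      exact hS u hu v huv
    · by_cases hux : σ.SameCycle u x
      · have := cut_main h hne
        have hu1 : u ∈ cyc σ x := mem_cyc.2 hux.symm
        have key : v ∈ cyc σ x := by
          rw [this.2, mem_union, mem_cyc, mem_cyc] at hu1 ⊢
          exact hu1.imp (fun h => h.trans huv) (fun h => h.trans huv)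
        exact hS x hx v (mem_cyc.1 key)
      · have := cyc_other (y := y) hux (fun h2 => hux (h2.trans h.symm))
        have hv : v ∈ cyc σ u := by rw [← this]; exact mem_cyc.2 huv
        exact hS u hu v (mem_cyc.1 hv)
  · by_cases hux : u ∈ cyc (swap x y * σ) x
    · have hv : v ∈ cyc (swap x y * σ) x := mem_cyc.2 ((mem_cyc.1 hux).trans huv)
      rw [join_main h, mem_union, mem_cyc, mem_cyc] at hv
      exact hv.elim (hS x hx v) (hS y hy v)
    · rw [join_main h, mem_union, mem_cyc, mem_cyc, not_or] at hux
      have := cyc_other (u := u) (fun h => hux.1 h.symm) (fun h => hux.2 h.symm)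
      have hv : v ∈ cyc σ u := by rw [← this]; exact mem_cyc.2 huv
      exact hS u hu v (mem_cyc.1 hv)

theorem cycs_cut {σ : Perm α} {S : Finset α} {x y : α} (hx : x ∈ S) (hy : y ∈ S)
    (h : σ.SameCycle x y) (hne : x ≠ y) :
    cycs (swap x y * σ) S = insert (cyc (swap x y * σ) x) (insert (cyc (swap x y * σ) y)
      ((cycs σ S).erase (cyc σ x))) := by
  have hm := (cut_main h hne).2
  ext c
  simp only [mem_insert, mem_erase, mem_cycs]
  constructor
  · rintro ⟨u, hu, rfl⟩
    by_cases hux : u ∈ cyc σ x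
    · rw [hm, mem_union] at hux
      rcases hux with h1 | h1
      · left; exact cyc_eq_of_mem h1
      · right; left; exact cyc_eq_of_mem h1
    · right; right
      have h1 : ¬ σ.SameCycle u x := fun h => hux (mem_cyc.2 h.symm)
      have h2 : ¬ σ.SameCycle u y := fun h' => h1 (h'.trans h.symm)
      rw [cyc_other h1 h2]
      exact ⟨fun e => h1 (cyc_eq_iff.1 e), u, hu, rfl⟩
  · rintro (rfl | rfl | ⟨h1, u, hu, rfl⟩)
    · exact ⟨x, hx, rfl⟩
    · exact ⟨y, hy, rfl⟩
    · have h1 : ¬ σ.SameCycle u x := fun e => h1 (cyc_eq_iff.2 e)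
      have h2 : ¬ σ.SameCycle u y := fun h' => h1 (h'.trans h.symm)
      exact ⟨u, hu, cyc_other h1 h2⟩

theorem cut_ne {σ : Perm α} {S : Finset α} {x y : α}
    (h : σ.SameCycle x y) (hne : x ≠ y) :
    cyc (swap x y * σ) x ≠ cyc (swap x y * σ) y ∧
    cyc (swap x y * σ) x ∉ (cycs σ S).erase (cyc σ x) ∧
    cyc (swap x y * σ) y ∉ (cycs σ S).erase (cyc σ x) := by
  have hm := (cut_main h hne).2
  refine ⟨fun e => cut_not_same h hne (cyc_eq_iff.1 e), ?_, ?_⟩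
  · rw [mem_erase, mem_cycs]
    rintro ⟨h1, u, hu, e⟩
    have : x ∈ cyc σ u := by rw [e]; exact self_mem_cyc _ _
    rw [← e] at h1
    exact h1 (cyc_eq_of_mem this).symm
  · rw [mem_erase, mem_cycs]
    rintro ⟨h1, u, hu, e⟩
    have : y ∈ cyc σ u := by rw [e]; exact self_mem_cyc _ _
    rw [← e, ← cyc_eq_of_mem this] at h1
    exact h1 (cyc_eq_iff.2 h.symm)

theorem cycs_join {σ : Perm α} {S : Finset α} {x y : α} (hx : x ∈ S) 
    (h : ¬ σ.SameCycle x y) :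
    cycs (swap x y * σ) S = insert (cyc σ x ∪ cyc σ y)
      (((cycs σ S).erase (cyc σ x)).erase (cyc σ y)) := by
  have hm := join_main h
  ext c
  simp only [mem_insert, mem_erase, mem_cycs]
  constructor
  · rintro ⟨u, hu, rfl⟩
    by_cases hux : u ∈ cyc (swap x y * σ) x
    · left; rw [← hm]; exact cyc_eq_of_mem hux
    · right
      rw [hm, mem_union, mem_cyc, mem_cyc, not_or] at hux
      rw [cyc_other (fun h => hux.1 h.symm) (fun h => hux.2 h.symm)]
      exact ⟨fun e => hux.2 (cyc_eq_iff.1 e).symm, fun e => hux.1 (cyc_eq_iff.1 e).symm, u, hu, rfl⟩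
  · rintro (rfl | ⟨h1, h2, u, hu, rfl⟩)
    · exact ⟨x, hx, hm⟩
    · exact ⟨u, hu, cyc_other (fun e => h2 (cyc_eq_iff.2 e)) (fun e => h1 (cyc_eq_iff.2 e))⟩

theorem join_ne {σ : Perm α} {S : Finset α} {x y : α} (h : ¬ σ.SameCycle x y) :
    cyc σ x ∪ cyc σ y ∉ ((cycs σ S).erase (cyc σ x)).erase (cyc σ y) := by
  simp only [mem_erase, mem_cycs]
  rintro ⟨h1, h2, u, hu, e⟩
  have : x ∈ cyc σ u := by rw [e, mem_union]; exact Or.inl (self_mem_cyc _ _)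
  rw [← e] at h2
  exact h2 (cyc_eq_of_mem this).symm

theorem join_disj {σ : Perm α} {x y : α} (h : ¬ σ.SameCycle x y) :
    Disjoint (cyc σ x) (cyc σ y) := by
  rw [Finset.disjoint_left]
  intro u h1 h2
  exact h ((mem_cyc.1 h1).trans (mem_cyc.1 h2).symm)

open Classical in
/-- The invariant subsets of `S` separating `x` from `y`. -/
noncomputable def cutSets (σ : Perm α) (S : Finset α) (x y : α) : Finset (Finset α) :=
  S.powerset.filter (fun A => Inv σ A ∧ x ∈ A ∧ y ∉ A)

theorem mem_cutSets {σ : Perm α} {S A : Finset α} {x y : α} :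
    A ∈ cutSets σ S x y ↔ A ⊆ S ∧ Inv σ A ∧ x ∈ A ∧ y ∉ A := by
  simp [cutSets]

theorem sum_cutSets {σ : Perm α} {S : Finset α} (hS : Inv σ S) {x y : α} (hx : x ∈ S) (hy : y ∈ S)
    (D : Finset (Finset α)) (hC : cycs σ S = insert (cyc σ x) (insert (cyc σ y) D))
    (hxD : cyc σ x ∉ D) (hyD : cyc σ y ∉ D) (hne : cyc σ x ≠ cyc σ y) (g : Finset (Finset α) → Finset (Finset α) → ℝ) :
    ∑ A ∈ cutSets σ S x y, g (cycs σ A) (cycs σ (S \ A)) =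
      ∑ T ∈ D.powerset, g (insert (cyc σ x) T) (insert (cyc σ y) (D \ T)) := by
  have hDu : ∀ T ⊆ D, ∀ c ∈ insert (cyc σ x) T, ∃ u, cyc σ u = c := by
    intro T hT c hc
    have : c ∈ cycs σ S := by
      rw [hC]
      rcases mem_insert.1 hc with h | h
      · simp [h]
      · simp [hT h]
    obtain ⟨u, _, e⟩ := mem_cycs.1 this
    exact ⟨u, e⟩
  refine Finset.sum_nbij' (fun A => (cycs σ A).erase (cyc σ x)) (fun T => (insert (cyc σ x) T).biUnion id) ?_ ?_ ?_ ?_ ?_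
  · intro A hA
    obtain ⟨h1, h2, h3, h4⟩ := mem_cutSets.1 hA
    rw [mem_powerset]
    intro c hc
    rw [mem_erase] at hc
    have : c ∈ cycs σ S := by
      obtain ⟨u, hu, e⟩ := mem_cycs.1 hc.2
      exact mem_cycs.2 ⟨u, h1 hu, e⟩
    rw [hC, mem_insert, mem_insert] at this
    rcases this with h | h | h
    · exact absurd h hc.1
    · subst h; exact absurd (h2.mem_of_cyc.1 hc.2) h4
    · exact h
  · intro T hT
    rw [mem_powerset] at hT
    have hI := inv_biUnion (hDu T hT)
    have hc := cycs_biUnion (hDu T hT)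
    rw [mem_cutSets]
    refine ⟨?_, hI, ?_, ?_⟩
    · intro v hv
      rw [← hI.mem_of_cyc, hc] at hv
      rw [← hS.mem_of_cyc, hC]
      rcases mem_insert.1 hv with h | h
      · simp [h]
      · simp [hT h]
    · rw [← hI.mem_of_cyc, hc]; simp
    · rw [← hI.mem_of_cyc, hc, mem_insert, not_or]
      exact ⟨hne.symm, fun h => hyD (hT h)⟩
  · intro A hA
    obtain ⟨h1, h2, h3, h4⟩ := mem_cutSets.1 hA
    rw [insert_erase (h2.mem_of_cyc.2 h3), h2.biUnion_cycs]
  · intro T hT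
    rw [mem_powerset] at hT
    rw [cycs_biUnion (hDu T hT), erase_insert (fun h => hxD (hT h))]
  · intro A hA
    obtain ⟨h1, h2, h3, h4⟩ := mem_cutSets.1 hA
    rw [insert_erase (h2.mem_of_cyc.2 h3), cycs_sdiff h2, hC]
    congr 1
    ext c
    have hy2 : cyc σ y ∉ cycs σ A := fun h => h4 (h2.mem_of_cyc.1 h)
    have hx2 : cyc σ x ∈ cycs σ A := (h2.mem_of_cyc.2 h3)
    simp only [mem_sdiff, mem_insert, mem_erase]
    by_cases e1 : c = cyc σ x
    · subst e1; simp [hx2, hne, hxD]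
    · by_cases e2 : c = cyc σ y
      · subst e2; simp [hy2]
      · simp [e1, e2]

theorem block_identity {σ : Perm α} {S : Finset α} (hS : Inv σ S) (hne : S.Nonempty) :
    2 * ((S.card : ℝ) + (cycs σ S).card - 2) * G σ S =
    ∑ x ∈ S, ∑ y ∈ S.erase x, (if σ.SameCycle x y then
      ∑ A ∈ cutSets (swap x y * σ) S x y, G (swap x y * σ) A * G (swap x y * σ) (S \ A)
      else G (swap x y * σ) S) := by
  have hk : ∀ c ∈ cycs σ S, 1 ≤ c.card := by
    intro c hc
    obtain ⟨u, _, rfl⟩ := mem_cycs.1 hc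
    exact Finset.card_pos.2 ⟨u, self_mem_cyc _ _⟩
  have hCne : (cycs σ S).Nonempty := by
    obtain ⟨u, hu⟩ := hne
    exact ⟨_, cyc_mem_cycs hu⟩
  have key := block_algebra (fun c : Finset α => c.card) (cycs σ S) hk (S.card : ℝ) hS.card hCne
  rw [G, ← key, ← hS.sum_cyc (fun c => (∏ j ∈ (cycs σ S).erase c, aa (j.card)) *
      ∑ r ∈ Ico 1 (c.card), aa r * aa (c.card - r) * ∑ A ∈ ((cycs σ S).erase c).powerset,
        ((r:ℝ) + ∑ i ∈ A, (i.card:ℝ)) ^ ((A.card : ℤ) - 2) *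
        (((c.card - r : ℕ):ℝ) + ∑ l ∈ ((cycs σ S).erase c) \ A, (l.card:ℝ)) ^ (((((cycs σ S).erase c) \ A).card : ℤ) - 2))]
  have e2 : ∑ i ∈ cycs σ S, ∑ j ∈ (cycs σ S).erase i, (i.card : ℝ) * j.card * ((S.card:ℝ) ^ (((cycs σ S).card : ℤ) - 4) * (aa (i.card + j.card) * ∏ l ∈ ((cycs σ S).erase i).erase j, aa (l.card)))
     = ∑ x ∈ S, ∑ y ∈ S, if σ.SameCycle x y then 0 else G (swap x y * σ) S := by
    have : ∀ x ∈ S, (∑ y ∈ S, if σ.SameCycle x y then 0 else G (swap x y * σ) S) =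
       ∑ j ∈ (cycs σ S).erase (cyc σ x), (j.card : ℝ) * ((S.card:ℝ) ^ (((cycs σ S).card : ℤ) - 4) * (aa ((cyc σ x).card + j.card) * ∏ l ∈ ((cycs σ S).erase (cyc σ x)).erase j, aa (l.card))) := by
      intro x hx
      have h1 : ∀ y ∈ S, (if σ.SameCycle x y then 0 else G (swap x y * σ) S) = 
         (fun d => if cyc σ x = d then 0 else ((S.card:ℝ) ^ (((cycs σ S).card : ℤ) - 4) * (aa ((cyc σ x).card + d.card) * ∏ l ∈ ((cycs σ S).erase (cyc σ x)).erase d, aa (l.card)))) (cyc σ y) := by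
        intro y hy
        simp only [cyc_eq_iff]
        split_ifs with h
        · rfl
        · have hn : cyc σ x ≠ cyc σ y := fun e => h (cyc_eq_iff.1 e)
          rw [G, cycs_join hx h, prod_insert (join_ne h), card_insert_of_notMem (join_ne h),
            card_union_of_disjoint (join_disj h)]
          congr 2
          have c1 := card_erase_add_one (cyc_mem_cycs (σ := σ) hx)
          have c2 := card_erase_add_one (mem_erase.2 ⟨hn.symm, cyc_mem_cycs (σ := σ) hy⟩)
          push_cast
          omega
      refine (sum_congr rfl h1).trans ((hS.sum_cyc (fun d => if cyc σ x = d then 0 else ((S.card:ℝ) ^ (((cycs σ S).card : ℤ) - 4) * (aa ((cyc σ x).card + d.card) * ∏ l ∈ ((cycs σ S).erase (cyc σ x)).erase d, aa (l.card))))).trans ?_)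
      rw [← add_sum_erase _ _ (cyc_mem_cycs hx)]
      simp only [if_true, mul_zero, zero_add]
      refine sum_congr rfl fun j hj => ?_
      rw [if_neg (mem_erase.1 hj).1.symm]
    rw [sum_congr rfl this, hS.sum_cyc (fun c => ∑ j ∈ (cycs σ S).erase c, (j.card : ℝ) * ((S.card:ℝ) ^ (((cycs σ S).card : ℤ) - 4) * (aa (c.card + j.card) * ∏ l ∈ ((cycs σ S).erase c).erase j, aa (l.card))))]
    refine sum_congr rfl fun c _ => ?_
    rw [mul_sum]
    refine sum_congr rfl fun d _ => ?_
    ring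
  rw [e2, ← sum_add_distrib]
  refine sum_congr rfl fun x hx => ?_
  have hsplit : ∑ y ∈ S.erase x, (if σ.SameCycle x y then
      ∑ A ∈ cutSets (swap x y * σ) S x y, G (swap x y * σ) A * G (swap x y * σ) (S \ A)
      else G (swap x y * σ) S) = 
      ∑ y ∈ (cyc σ x).erase x, (∑ A ∈ cutSets (swap x y * σ) S x y, G (swap x y * σ) A * G (swap x y * σ) (S \ A))
      + ∑ y ∈ S, if σ.SameCycle x y then 0 else G (swap x y * σ) S := by
    rw [← add_sum_erase S _ hx, if_pos (Perm.SameCycle.refl _ _), zero_add]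
    have : (cyc σ x).erase x = (S.erase x).filter (fun y => σ.SameCycle x y) := by
      ext y
      simp only [mem_erase, mem_filter, mem_cyc]
      exact ⟨fun h => ⟨⟨h.1, hS x hx y h.2⟩, h.2⟩, fun h => ⟨h.1.1, h.2⟩⟩
    rw [this, sum_filter, ← sum_add_distrib]
    refine sum_congr rfl fun y _ => ?_
    split_ifs <;> simp
  rw [hsplit]
  congr 1
  rw [← sum_cut σ x (fun r s => aa r * aa s * ∑ A ∈ ((cycs σ S).erase (cyc σ x)).powerset,
        ((r:ℝ) + ∑ i ∈ A, (i.card:ℝ)) ^ ((A.card : ℤ) - 2) *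
        ((s:ℝ) + ∑ l ∈ ((cycs σ S).erase (cyc σ x)) \ A, (l.card:ℝ)) ^ (((((cycs σ S).erase (cyc σ x)) \ A).card : ℤ) - 2)), mul_sum]
  refine sum_congr rfl fun y hy => ?_
  obtain ⟨hyx, hy⟩ := mem_erase.1 hy
  rw [mem_cyc] at hy
  have hyS := hS x hx y hy
  have hS' := inv_cut hS hx hyS
  obtain ⟨n1, n2, n3⟩ := cut_ne (S := S) hy hyx.symm
  set σ' := swap x y * σ
  set D := (cycs σ S).erase (cyc σ x) with hD
  have hG : ∑ A ∈ cutSets σ' S x y, G σ' A * G σ' (S \ A) = 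
     ∑ A ∈ cutSets σ' S x y, (fun K L : Finset (Finset α) => 
       ((∑ c ∈ K, (c.card : ℝ))^((K.card:ℤ) - 3) * ∏ c ∈ K, aa c.card) * 
       ((∑ c ∈ L, (c.card : ℝ))^((L.card:ℤ) - 3) * ∏ c ∈ L, aa c.card)) (cycs σ' A) (cycs σ' (S \ A)) := by
    refine sum_congr rfl fun A hA => ?_
    obtain ⟨h1, h2, h3, h4⟩ := mem_cutSets.1 hA
    rw [h2.G_eq, (hS'.sdiff h2).G_eq]
  rw [hG]
  refine Eq.trans ?_ (sum_cutSets hS' hx hyS D (cycs_cut hx hyS hy hyx.symm) n2 n3 n1 (fun K L : Finset (Finset α) => 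
       ((∑ c ∈ K, (c.card : ℝ))^((K.card:ℤ) - 3) * ∏ c ∈ K, aa c.card) * 
       ((∑ c ∈ L, (c.card : ℝ))^((L.card:ℤ) - 3) * ∏ c ∈ L, aa c.card))).symm
  rw [mul_sum, mul_sum]
  refine sum_congr rfl fun T hT => ?_
  rw [mem_powerset] at hT
  have m1 : cyc σ' x ∉ T := fun h => n2 (hT h)
  have m2 : cyc σ' y ∉ D \ T := fun h => n3 (mem_sdiff.1 h).1
  rw [sum_insert m1, sum_insert m2, prod_insert m1, prod_insert m2, card_insert_of_notMem m1,
    card_insert_of_notMem m2, ← prod_sdiff hT]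
  rw [show (((T.card + 1 : ℕ) : ℤ) - 3) = (T.card : ℤ) - 2 by push_cast; ring,
    show ((((D \ T).card + 1 : ℕ) : ℤ) - 3) = ((D \ T).card : ℤ) - 2 by push_cast; ring]
  ring

end blk
end Hur

namespace Hur
open Finset Equiv

section conn
variable {α : Type*} [Fintype α] [DecidableEq α]

theorem setoid_finite : Finite (Setoid α) :=
  Finite.of_injective (fun (V : Setoid α) (p : α × α) => V p.1 p.2) (by
    intro V W h
    ext x y
    have := congrFun h (x, y)
    simpa using this)

noncomputable instance instFintypeSetoidHur : Fintype (Setoid α) :=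
  @Fintype.ofFinite _ setoid_finite

/-- `V` is respected by `σ`. -/
def Resp (V : Setoid α) (σ : Perm α) : Prop := ∀ u, V u (σ u)

theorem Resp.same {V : Setoid α} {σ : Perm α} (h : Resp V σ) {u v : α} (huv : σ.SameCycle u v) :
    V u v := by
  obtain ⟨i, rfl⟩ := huv.exists_nat_pow_eq
  induction i with
  | zero => simpa using V.refl u
  | succ i ih =>
    rw [pow_succ', Perm.mul_apply]
    exact V.trans (ih ⟨i, by simp⟩) (h _)

theorem Resp.mul {V : Setoid α} {σ τ : Perm α} (h : Resp V σ) (h2 : Resp V τ) : Resp V (σ * τ) := by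
  intro u
  exact V.trans (h2 u) (h (τ u))

theorem resp_swap {V : Setoid α} {x y : α} : Resp V (swap x y) ↔ V x y := by
  constructor
  · intro h
    have := h x
    rwa [swap_apply_left] at this
  · intro h u
    by_cases h1 : u = x
    · subst h1; rwa [swap_apply_left]
    · by_cases h2 : u = y
      · subst h2; rw [swap_apply_right]; exact V.symm h
      · rw [swap_apply_of_ne_of_ne h1 h2]

theorem resp_le {V : Setoid α} {σ : Perm α} : Resp V σ ↔ Perm.SameCycle.setoid σ ≤ V := by
  constructor
  · intro h
    rw [Setoid.le_def]
    intro u v huv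
    exact h.same huv
  · intro h u
    rw [Setoid.le_def] at h
    exact h (show σ.SameCycle u (σ u) from ⟨1, by simp⟩)

theorem Resp.mono {V W : Setoid α} {σ : Perm α} (h : Resp W σ) (hle : W ≤ V) : Resp V σ :=
  resp_le.2 ((resp_le.1 h).trans hle)

/-- Explicit merging of the classes of `x` and `y`. -/
def merge (W : Setoid α) (x y : α) : Setoid α where
  r u v := W u v ∨ (W u x ∧ W y v) ∨ (W u y ∧ W x v)
  iseqv := by
    constructor
    · intro u; left; exact W.refl u
    · rintro u v (h | ⟨h1, h2⟩ | ⟨h1, h2⟩)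
      · left; exact W.symm h
      · right; right; exact ⟨W.symm h2, W.symm h1⟩
      · right; left; exact ⟨W.symm h2, W.symm h1⟩
    · rintro u v w (h | ⟨h1, h2⟩ | ⟨h1, h2⟩) (k | ⟨k1, k2⟩ | ⟨k1, k2⟩)
      · left; exact W.trans h k
      · right; left; exact ⟨W.trans h k1, k2⟩
      · right; right; exact ⟨W.trans h k1, k2⟩
      · right; left; exact ⟨h1, W.trans h2 k⟩
      · right; left; exact ⟨h1, k2⟩
      · left; exact W.trans h1 k2
      · right; right; exact ⟨h1, W.trans h2 k⟩
      · left; exact W.trans h1 k2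
      · right; right; exact ⟨h1, k2⟩

theorem merge_eq (W : Setoid α) (x y : α) : Perm.SameCycle.setoid (swap x y) ⊔ W = merge W x y := by
  apply le_antisymm
  · apply sup_le
    · rw [← resp_le, resp_swap]
      right; left
      exact ⟨W.refl x, W.refl y⟩
    · rw [Setoid.le_def]
      intro u v h
      exact Or.inl h
  · have h1 : W ≤ Perm.SameCycle.setoid (swap x y) ⊔ W := le_sup_right
    have h2 : Perm.SameCycle.setoid (swap x y) ≤ Perm.SameCycle.setoid (swap x y) ⊔ W := le_sup_left
    rw [← resp_le, resp_swap] at h2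
    generalize Perm.SameCycle.setoid (swap x y) ⊔ W = V at h1 h2
    rw [Setoid.le_def] at h1 ⊢
    rintro u v (h | ⟨h, k⟩ | ⟨h, k⟩)
    · exact h1 h
    · exact V.trans (h1 h) (V.trans h2 (h1 k))
    · exact V.trans (h1 h) (V.trans (V.symm h2) (h1 k))

theorem merge_iff {W : Setoid α} {x y u v : α} :
    merge W x y u v ↔ W u v ∨ (W u x ∧ W y v) ∨ (W u y ∧ W x v) := Iff.rfl

theorem merge_self {W : Setoid α} {x y : α} (h : W x y) : merge W x y = W := by
  ext u v
  rw [merge_iff]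
  constructor
  · rintro (h1 | ⟨h1, h2⟩ | ⟨h1, h2⟩)
    · exact h1
    · exact W.trans h1 (W.trans h h2)
    · exact W.trans h1 (W.trans (W.symm h) h2)
  · exact Or.inl

theorem merge_xy (W : Setoid α) (x y : α) : merge W x y x y := Or.inr (Or.inl ⟨W.refl x, W.refl y⟩)

theorem le_merge (W : Setoid α) (x y : α) : W ≤ merge W x y := by
  rw [Setoid.le_def]; exact Or.inl

open Classical in
/-- The class of `x`. -/
noncomputable def blk (V : Setoid α) (x : α) : Finset α := univ.filter (fun y => V x y)

/-- All classes. -/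
noncomputable def blocks (V : Setoid α) : Finset (Finset α) := univ.image (blk V)

theorem mem_blk {V : Setoid α} {x y : α} : y ∈ blk V x ↔ V x y := by simp [blk]

theorem self_mem_blk (V : Setoid α) (x : α) : x ∈ blk V x := mem_blk.2 (V.refl x)

theorem blk_eq_iff {V : Setoid α} {x y : α} : blk V x = blk V y ↔ V x y := by
  constructor
  · intro h
    have := self_mem_blk V y
    rw [← h] at this
    exact mem_blk.1 this
  · intro h
    ext z
    rw [mem_blk, mem_blk]
    exact ⟨fun h2 => V.trans (V.symm h) h2, fun h2 => V.trans h h2⟩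

theorem mem_blocks {V : Setoid α} {B : Finset α} : B ∈ blocks V ↔ ∃ u, blk V u = B := by
  simp [blocks]

theorem blk_mem_blocks (V : Setoid α) (u : α) : blk V u ∈ blocks V := mem_blocks.2 ⟨u, rfl⟩

theorem sum_blocks (V : Setoid α) (Q : Finset α → α → ℝ) :
    ∑ x, Q (blk V x) x = ∑ B ∈ blocks V, ∑ x ∈ B, Q B x := by
  rw [← Finset.sum_fiberwise_of_maps_to (g := blk V) (t := blocks V) (fun x _ => blk_mem_blocks V x)]
  refine sum_congr rfl fun B hB => ?_
  obtain ⟨u, rfl⟩ := mem_blocks.1 hB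
  refine sum_congr ?_ ?_
  · ext v
    rw [mem_filter, mem_blk, blk_eq_iff]
    exact ⟨fun h => V.symm h.2, fun h => ⟨mem_univ _, V.symm h⟩⟩
  · intro x hx
    rw [blk_eq_iff.2 (V.symm (mem_blk.1 hx))]

theorem Resp.inv {V : Setoid α} {σ : Perm α} (h : Resp V σ) {B : Finset α} (hB : B ∈ blocks V) :
    Inv σ B := by
  obtain ⟨x, rfl⟩ := mem_blocks.1 hB
  intro u hu v huv
  rw [mem_blk] at hu ⊢
  exact V.trans hu (h.same huv)

theorem blocks_split {W : Setoid α} {x y : α} (h : ¬ W x y) :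
    blocks W = insert (blk W x) (insert (blk W y) ((blocks (merge W x y)).erase (blk (merge W x y) x))) ∧
    blk W x ≠ blk W y ∧ blk W x ∉ (blocks (merge W x y)).erase (blk (merge W x y) x) ∧
    blk W y ∉ (blocks (merge W x y)).erase (blk (merge W x y) x) ∧
    blk (merge W x y) x \ blk W x = blk W y := by
  have hb : ∀ u, u ∈ blk (merge W x y) x ↔ W x u ∨ W y u := by
    intro u
    rw [mem_blk, merge_iff]
    constructor
    · rintro (h1 | ⟨h1, h2⟩ | ⟨h1, h2⟩)
      · exact Or.inl h1
      · exact Or.inr h2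
      · exact absurd h1 h
    · rintro (h1 | h1)
      · exact Or.inl h1
      · exact Or.inr (Or.inl ⟨W.refl x, h1⟩)
  have hother : ∀ u, ¬ W x u → ¬ W y u → blk (merge W x y) u = blk W u := by
    intro u h1 h2
    ext v
    rw [mem_blk, mem_blk, merge_iff]
    constructor
    · rintro (h3 | ⟨h3, _⟩ | ⟨h3, _⟩)
      · exact h3
      · exact absurd (W.symm h3) h1
      · exact absurd (W.symm h3) h2
    · exact Or.inl
  refine ⟨?_, ?_, ?_, ?_, ?_⟩
  · ext c
    simp only [mem_insert, mem_erase, mem_blocks]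
    constructor
    · rintro ⟨u, rfl⟩
      by_cases hx : W x u
      · left; exact (blk_eq_iff.2 hx).symm
      · by_cases hy : W y u
        · right; left; exact (blk_eq_iff.2 hy).symm
        · right; right
          refine ⟨?_, u, hother u hx hy⟩
          intro e
          have := self_mem_blk W u
          rw [e, hb] at this
          exact this.elim hx hy
    · rintro (rfl | rfl | ⟨h1, u, rfl⟩)
      · exact ⟨x, rfl⟩
      · exact ⟨y, rfl⟩
      · refine ⟨u, (hother u ?_ ?_).symm⟩
        · intro h2; apply h1; exact blk_eq_iff.2 ((merge W x y).symm (mem_blk.1 ((hb u).2 (Or.inl h2))))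
        · intro h2; apply h1; exact blk_eq_iff.2 ((merge W x y).symm (mem_blk.1 ((hb u).2 (Or.inr h2))))
  · exact fun e => h (blk_eq_iff.1 e)
  · rw [mem_erase, mem_blocks]
    rintro ⟨h1, u, e⟩
    rw [← e] at h1
    have : x ∈ blk (merge W x y) u := by rw [e]; exact self_mem_blk W x
    exact h1 (blk_eq_iff.2 (mem_blk.1 this))
  · rw [mem_erase, mem_blocks]
    rintro ⟨h1, u, e⟩
    rw [← e] at h1
    have : y ∈ blk (merge W x y) u := by rw [e]; exact self_mem_blk W y
    exact h1 (blk_eq_iff.2 ((merge W x y).trans (mem_blk.1 this) ((merge W x y).symm (merge_xy W x y))))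
  · ext u
    rw [mem_sdiff, hb, mem_blk, mem_blk]
    constructor
    · rintro ⟨h1 | h1, h2⟩
      · exact absurd h1 h2
      · exact h1
    · intro h1
      exact ⟨Or.inr h1, fun h2 => h (W.trans h2 (W.symm h1))⟩

theorem card_blocks_split {W : Setoid α} {x y : α} (h : ¬ W x y) :
    (blocks W).card = (blocks (merge W x y)).card + 1 := by
  obtain ⟨h1, h2, h3, h4, -⟩ := blocks_split h
  rw [h1, card_insert_of_notMem, card_insert_of_notMem h4, card_erase_add_one (blk_mem_blocks _ _)]
  rw [mem_insert, not_or]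
  exact ⟨h2, h3⟩

/-- number of cycles -/
def ell (σ : Perm α) : ℕ := (cycs σ univ).card

theorem ell_cut {σ : Perm α} {x y : α} (h : σ.SameCycle x y) (hne : x ≠ y) :
    ell (swap x y * σ) = ell σ + 1 := by
  obtain ⟨n1, n2, n3⟩ := cut_ne (S := univ) h hne
  rw [ell, cycs_cut (mem_univ _) (mem_univ _) h hne, card_insert_of_notMem, card_insert_of_notMem n3,
    card_erase_add_one (cyc_mem_cycs (mem_univ _)), ell]
  rw [mem_insert, not_or]
  exact ⟨n1, n2⟩

theorem ell_join {σ : Perm α} {x y : α} (h : ¬ σ.SameCycle x y) :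
    ell (swap x y * σ) + 1 = ell σ := by
  have hne : x ≠ y := by rintro rfl; exact h (Perm.SameCycle.refl _ _)
  have := ell_cut (join_same h) hne
  rw [← mul_assoc, swap_mul_self, one_mul] at this
  exact this.symm

/-- Connectivity relation of a list. -/
def connL : List (Perm α) → Setoid α
  | [] => ⊥
  | τ :: l => Perm.SameCycle.setoid τ ⊔ connL l

theorem connL_resp (l : List (Perm α)) : Resp (connL l) l.prod := by
  induction l with
  | nil => intro u; simpa using (connL ([] : List (Perm α))).refl u
  | cons τ l ih =>
    rw [List.prod_cons]
    exact Resp.mul (resp_le.2 le_sup_left) (ih.mono le_sup_right)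

theorem blk_bot (x : α) : blk (⊥ : Setoid α) x = {x} := by
  ext y
  rw [mem_blk, mem_singleton]
  exact eq_comm

theorem cyc_one (x : α) : cyc (1 : Perm α) x = {x} := by
  ext y
  rw [mem_cyc, mem_singleton, Perm.sameCycle_one]
  exact eq_comm

theorem rh (l : List (Perm α)) (hl : ∀ τ ∈ l, τ.IsSwap) :
    Fintype.card α + ell l.prod ≤ l.length + 2 * (blocks (connL l)).card := by
  induction l with
  | nil =>
    have h1 : (blocks (⊥ : Setoid α)).card = Fintype.card α := by
      rw [blocks, card_image_of_injective, card_univ]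
      intro x y h
      exact blk_eq_iff.1 h
    have h2 : ell (1 : Perm α) ≤ Fintype.card α := by
      rw [ell, cycs]; exact card_image_le
    simp only [connL, List.prod_nil, List.length_nil]
    omega
  | cons τ l ih =>
    have ih := ih (fun t ht => hl t (List.mem_cons_of_mem _ ht))
    obtain ⟨x, y, hxy, rfl⟩ := hl τ List.mem_cons_self
    rw [List.prod_cons, connL, merge_eq, List.length_cons]
    by_cases h : connL l x y
    · rw [merge_self h]
      by_cases hs : l.prod.SameCycle x y
      · rw [ell_cut hs hxy]; omega
      · have := ell_join hs; omega
    · have h1 := card_blocks_split h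
      have hs : ¬ l.prod.SameCycle x y := fun hs => h ((connL_resp l).same hs)
      have := ell_join hs
      omega

/-- The list `l` is a transposition factorization of `σ` with connectivity `V`. -/
def good (l : List (Perm α)) (V : Setoid α) (σ : Perm α) : Prop :=
  (∀ τ ∈ l, τ.IsSwap) ∧ l.prod = σ ∧ connL l = V

open Classical in
/-- Number of factorizations. -/
noncomputable def N (m : ℕ) (V : Setoid α) (σ : Perm α) : ℝ :=
  ∑ f : Fin m → Perm α, if good (List.ofFn f) V σ then 1 else 0

theorem N_resp {m : ℕ} {V : Setoid α} {σ : Perm α} (h : ¬ Resp V σ) : N m V σ = 0 := by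
  rw [N]
  refine sum_eq_zero fun f _ => ?_
  rw [if_neg]
  rintro ⟨-, rfl, rfl⟩
  exact h (connL_resp _)

theorem N_rh {m : ℕ} {V : Setoid α} {σ : Perm α}
    (h : m + 2 * (blocks V).card < Fintype.card α + ell σ) : N m V σ = 0 := by
  rw [N]
  refine sum_eq_zero fun f _ => ?_
  rw [if_neg]
  rintro ⟨h1, rfl, rfl⟩
  have := rh _ h1
  rw [List.length_ofFn] at this
  omega

open Classical in
theorem N_succ (m : ℕ) (V : Setoid α) (σ : Perm α) :
    N (m+1) V σ = ∑ τ : Perm α, if τ.IsSwap then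
      ∑ W : Setoid α, if Perm.SameCycle.setoid τ ⊔ W = V then N m W (τ⁻¹ * σ) else 0 else 0 := by
  have e : N (m+1) V σ = ∑ p : Perm α × (Fin m → Perm α),
      if good (p.1 :: List.ofFn p.2) V σ then 1 else 0 := by
    rw [N]
    refine (Fintype.sum_equiv (Fin.consEquiv (fun _ : Fin (m+1) => Perm α)) _ _ ?_).symm
    rintro ⟨τ, f⟩
    have : List.ofFn (Fin.consEquiv (fun _ : Fin (m+1) => Perm α) (τ, f)) = τ :: List.ofFn f := 
      List.ofFn_cons τ f
    rw [this]
  rw [e, Fintype.sum_prod_type]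
  refine sum_congr rfl fun τ _ => ?_
  by_cases hτ : τ.IsSwap
  · rw [if_pos hτ]
    have hN : ∀ W : Setoid α, (if Perm.SameCycle.setoid τ ⊔ W = V then N m W (τ⁻¹ * σ) else 0) =
        ∑ f : Fin m → Perm α, if Perm.SameCycle.setoid τ ⊔ W = V then
          (if good (List.ofFn f) W (τ⁻¹ * σ) then (1:ℝ) else 0) else 0 := by
      intro W
      by_cases hW : Perm.SameCycle.setoid τ ⊔ W = V
      · simp only [if_pos hW, N]
      · simp only [if_neg hW, sum_const_zero]
    rw [sum_congr rfl (fun W _ => hN W), sum_comm]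
    refine sum_congr rfl fun f _ => ?_
    rw [Finset.sum_eq_single (connL (List.ofFn f))]
    · rw [← ite_and]
      congr 1
      apply propext
      simp only [good, connL, List.prod_cons, List.mem_cons, forall_eq_or_imp, hτ, true_and, and_true]
      rw [eq_inv_mul_iff_mul_eq]
      tauto
    · intro W _ hW
      split_ifs with h1 h2
      · exact absurd h2.2.2.symm hW
      · rfl
      · rfl
    · intro h; exact absurd (mem_univ _) h
  · rw [if_neg hτ]
    refine sum_eq_zero fun f _ => ?_
    rw [if_neg]
    intro h
    exact hτ (h.1 τ List.mem_cons_self)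

open Classical in
theorem sum_swaps (g : Perm α → ℝ) :
    ∑ x, ∑ y ∈ univ.erase x, g (swap x y) = 2 * ∑ τ : Perm α, if τ.IsSwap then g τ else 0 := by
  have h1 : ∑ x : α, ∑ y ∈ univ.erase x, g (swap x y) =
      ∑ p ∈ (univ : Finset (α × α)).filter (fun p => p.1 ≠ p.2), g (swap p.1 p.2) := by
    rw [sum_filter, Fintype.sum_prod_type]
    refine sum_congr rfl fun x _ => ?_
    rw [← sum_filter]
    refine sum_congr ?_ fun _ _ => rfl
    ext y; simp [eq_comm]
  rw [h1, ← Finset.sum_filter, ← Finset.sum_fiberwise_of_maps_to (g := fun p : α × α => swap p.1 p.2)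
    (t := univ.filter (fun τ : Perm α => τ.IsSwap)), mul_sum]
  · refine sum_congr rfl fun τ hτ => ?_
    rw [mem_filter] at hτ
    obtain ⟨a, b, hab, rfl⟩ := hτ.2
    have : (univ.filter (fun p : α × α => p.1 ≠ p.2)).filter (fun p => swap p.1 p.2 = swap a b) =
      {(a, b), (b, a)} := by
      ext ⟨u, v⟩
      simp only [mem_filter, mem_univ, true_and, mem_insert, mem_singleton, Prod.mk.injEq]
      constructor
      · rintro ⟨huv, h⟩
        have h2 := swap_apply_left u v
        rw [h] at h2
        have hu : u = a ∨ u = b := by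
          by_contra hc
          rw [not_or] at hc
          rw [swap_apply_of_ne_of_ne hc.1 hc.2] at h2
          exact huv h2
        rcases hu with rfl | rfl
        · left; rw [swap_apply_left] at h2; exact ⟨rfl, h2.symm⟩
        · right; rw [swap_apply_right] at h2; exact ⟨rfl, h2.symm⟩
      · rintro (⟨rfl, rfl⟩ | ⟨rfl, rfl⟩)
        · exact ⟨hab, rfl⟩
        · exact ⟨hab.symm, swap_comm _ _⟩
    rw [this, sum_pair, swap_comm b a]
    · ring
    · intro h; rw [Prod.mk.injEq] at h; exact hab h.1
  · intro p hp
    rw [mem_filter] at hp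
    rw [mem_filter]
    exact ⟨mem_univ _, p.1, p.2, hp.2, rfl⟩

open Classical in
theorem N_succ2 (m : ℕ) (V : Setoid α) (σ : Perm α) :
    2 * N (m+1) V σ = ∑ x, ∑ y ∈ univ.erase x,
      ∑ W : Setoid α, if merge W x y = V then N m W (swap x y * σ) else 0 := by
  rw [N_succ, ← sum_swaps (fun τ => ∑ W : Setoid α, if Perm.SameCycle.setoid τ ⊔ W = V then N m W (τ⁻¹ * σ) else 0)]
  simp only [merge_eq, swap_inv]

end conn
end Hur

namespace Hur
open Finset Equiv

section main
variable {α : Type*} [Fintype α] [DecidableEq α]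

/-- Weight of a partitioned permutation. -/
noncomputable def F (V : Setoid α) (σ : Perm α) : ℝ := ∏ B ∈ blocks V, G σ B

theorem G_other {V : Setoid α} {σ : Perm α} (hV : Resp V σ) {x y : α} (hxy : V x y) {B : Finset α}
    (hB : B ∈ (blocks V).erase (blk V x)) : G (swap x y * σ) B = G σ B := by
  have : cycs (swap x y * σ) B = cycs σ B := by
    rw [mem_erase] at hB
    obtain ⟨h1, h2⟩ := hB
    obtain ⟨w, rfl⟩ := mem_blocks.1 h2
    refine image_congr fun u hu => ?_
    have hu : V w u := mem_blk.1 hu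
    have hx : ¬ V u x := fun h => h1 (blk_eq_iff.2 (V.trans hu h))
    exact cyc_other (fun h => hx (hV.same h)) (fun h => hx (V.trans (hV.same h) (V.symm hxy)))
  rw [G, G, this]

theorem F_eq {V : Setoid α} {σ : Perm α} (hV : Resp V σ) {x y : α} (hxy : V x y) :
    F V (swap x y * σ) = G (swap x y * σ) (blk V x) * ∏ B ∈ (blocks V).erase (blk V x), G σ B := by
  rw [F, ← mul_prod_erase _ _ (blk_mem_blocks V x)]
  congr 1
  exact prod_congr rfl fun B hB => G_other hV hxy hB

/-- Split `V` along `A`. -/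
def splitS (V : Setoid α) (A : Finset α) : Setoid α where
  r u v := V u v ∧ (u ∈ A ↔ v ∈ A)
  iseqv := ⟨fun u => ⟨V.refl u, Iff.rfl⟩, fun h => ⟨V.symm h.1, h.2.symm⟩,
    fun h k => ⟨V.trans h.1 k.1, h.2.trans k.2⟩⟩

theorem splitS_iff {V : Setoid α} {A : Finset α} {u v : α} :
    splitS V A u v ↔ V u v ∧ (u ∈ A ↔ v ∈ A) := Iff.rfl

theorem splitS_blk {V : Setoid α} {A : Finset α} {x : α} (hA : A ⊆ blk V x) (hx : x ∈ A) :
    blk (splitS V A) x = A := by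
  ext u
  rw [mem_blk, splitS_iff]
  constructor
  · intro h; exact h.2.1 hx
  · intro h; exact ⟨mem_blk.1 (hA h), by simp [hx, h]⟩

theorem splitS_merge {V : Setoid α} {A : Finset α} {x y : α} (hxy : V x y) (hA : A ⊆ blk V x)
    (hx : x ∈ A) (hy : y ∉ A) : merge (splitS V A) x y = V := by
  ext u v
  simp only [merge_iff, splitS_iff, hx, hy, iff_true, iff_false, true_iff, false_iff]
  constructor
  · rintro (h | ⟨h1, h2⟩ | ⟨h1, h2⟩)
    · exact h.1
    · exact V.trans h1.1 (V.trans hxy h2.1)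
    · exact V.trans h1.1 (V.trans (V.symm hxy) h2.1)
  · intro h
    by_cases hu : u ∈ A
    · have hxu : V x u := mem_blk.1 (hA hu)
      by_cases hv : v ∈ A
      · left; exact ⟨h, by simp [hu, hv]⟩
      · right; left
        exact ⟨⟨V.symm hxu, hu⟩, V.trans (V.symm hxy) (V.trans hxu h), hv⟩
    · by_cases hv : v ∈ A
      · have hxv : V x v := mem_blk.1 (hA hv)
        right; right
        exact ⟨⟨V.trans h (V.trans (V.symm hxv) hxy), hu⟩, hxv, hv⟩
      · left; exact ⟨h, by simp [hu, hv]⟩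

theorem splitS_resp {V : Setoid α} {A : Finset α} {σ : Perm α} (hV : Resp V σ) (hA : Inv σ A) :
    Resp (splitS V A) σ := by
  intro u
  have : σ.SameCycle u (σ u) := ⟨1, by simp⟩
  exact ⟨hV u, fun h => hA _ h _ this, fun h => hA _ h _ this.symm⟩

theorem splitS_of {W : Setoid α} {x y : α} (h : ¬ W x y) : splitS (merge W x y) (blk W x) = W := by
  ext u v
  rw [splitS_iff, merge_iff, mem_blk, mem_blk]
  constructor
  · rintro ⟨h1 | ⟨h1, h2⟩ | ⟨h1, h2⟩, h3⟩
    · exact h1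
    · have := h3.1 (W.symm h1)
      exact absurd (W.trans this (W.symm h2)) h
    · have := h3.2 h2
      exact absurd (W.trans this h1) h
  · intro h1
    exact ⟨Or.inl h1, fun k => W.trans k h1, fun k => W.trans k (W.symm h1)⟩

theorem F_split {V : Setoid α} {σ : Perm α} (hV : Resp V σ) {A : Finset α} {x y : α} (hxy : V x y)
    (hA : A ⊆ blk V x) (hx : x ∈ A) (hy : y ∉ A) :
    F (splitS V A) (swap x y * σ) = (G (swap x y * σ) A * G (swap x y * σ) (blk V x \ A)) *
      ∏ B ∈ (blocks V).erase (blk V x), G σ B := by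
  have hn : ¬ splitS V A x y := fun h => hy (h.2.1 hx)
  obtain ⟨h1, h2, h3, h4, h5⟩ := blocks_split hn
  rw [splitS_merge hxy hA hx hy] at h1 h3 h4 h5
  rw [F, h1, prod_insert, prod_insert h4, ← h5, splitS_blk hA hx, ← mul_assoc]
  · congr 1
    exact prod_congr rfl fun B hB => G_other hV hxy hB
  · rw [mem_insert, not_or]
    exact ⟨h2, h3⟩

open Classical in
theorem sum_pairs (V : Setoid α) (g : α → α → Setoid α → ℝ) :
    (∑ x, ∑ y ∈ univ.erase x, ∑ W : Setoid α, if merge W x y = V then g x y W else 0) =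
    ∑ B ∈ blocks V, ∑ x ∈ B, ∑ y ∈ B.erase x, ∑ W : Setoid α, if merge W x y = V then g x y W else 0 := by
  rw [← sum_blocks V (fun B x => ∑ y ∈ B.erase x, ∑ W : Setoid α, if merge W x y = V then g x y W else 0)]
  refine sum_congr rfl fun x _ => ?_
  symm
  apply sum_subset
  · exact erase_subset_erase _ (subset_univ _)
  · intro y h1 h2
    refine sum_eq_zero fun W _ => ?_
    rw [if_neg]
    rintro rfl
    apply h2
    rw [mem_erase] at h1 ⊢
    exact ⟨h1.1, mem_blk.2 (merge_xy W x y)⟩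

theorem sum_card_blocks {V : Setoid α} {σ : Perm α} (hV : Resp V σ) :
    ∑ B ∈ blocks V, ((B.card : ℝ) + (cycs σ B).card - 2) =
      Fintype.card α + ell σ - 2 * (blocks V).card := by
  rw [sum_sub_distrib, sum_add_distrib, sum_const, nsmul_eq_mul, mul_comm]
  congr 2
  · have := sum_blocks V (fun _ _ => 1)
    simpa using this.symm
  · rw [← Nat.cast_sum, ell]
    congr 1
    rw [← card_biUnion]
    · congr 1
      ext c
      simp only [mem_biUnion, mem_cycs, mem_univ, true_and]
      constructor
      · rintro ⟨B, hB, u, hu, rfl⟩; exact ⟨u, rfl⟩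
      · rintro ⟨u, rfl⟩; exact ⟨blk V u, blk_mem_blocks V u, u, self_mem_blk V u, rfl⟩
    · intro B hB B' hB' hne
      obtain ⟨w, rfl⟩ := mem_blocks.1 hB
      obtain ⟨w', rfl⟩ := mem_blocks.1 hB'
      rw [Function.onFun, Finset.disjoint_left]
      intro c h1 h2
      obtain ⟨u, hu, rfl⟩ := mem_cycs.1 h1
      obtain ⟨u', hu', e⟩ := mem_cycs.1 h2
      apply hne
      rw [blk_eq_iff]
      exact V.trans (mem_blk.1 hu) (V.trans (hV.same (cyc_eq_iff.1 e.symm)) (V.symm (mem_blk.1 hu')))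

theorem card_blocks_le {V : Setoid α} {σ : Perm α} (hV : Resp V σ) : (blocks V).card ≤ ell σ := by
  have : blocks V = (cycs σ univ).image (fun c => c.biUnion (blk V)) := by
    ext B
    simp only [mem_blocks, mem_image, mem_cycs, mem_univ, true_and, exists_exists_eq_and]
    have : ∀ u, (cyc σ u).biUnion (blk V) = blk V u := by
      intro u
      ext v
      rw [mem_biUnion]
      constructor
      · rintro ⟨w, hw, hv⟩
        exact mem_blk.2 (V.trans (hV.same (mem_cyc.1 hw)) (mem_blk.1 hv))
      · intro hv; exact ⟨u, self_mem_cyc σ u, hv⟩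
    simp only [this]
  rw [this]
  exact card_image_le

theorem N_zero {V : Setoid α} {σ : Perm α} (hV : Resp V σ)
    (h : Fintype.card α + ell σ = 2 * (blocks V).card) : N 0 V σ = F V σ := by
  have h1 := card_blocks_le hV
  have h2 : (blocks V).card ≤ Fintype.card α := by
    rw [blocks]; exact card_image_le
  have hinj : Set.InjOn (blk V) (univ : Finset α) := by
    rw [← card_image_iff]
    change (blocks V).card = _
    rw [card_univ]; omega
  have hVb : V = ⊥ := by
    ext u v
    constructor
    · intro h; exact hinj (by simp) (by simp) (blk_eq_iff.2 h)
    · rintro rfl; exact V.refl _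
  subst hVb
  have hs : σ = 1 := by
    ext u
    have : u = σ u := hV u
    rw [← this]; rfl
  subst hs
  rw [N, F, prod_eq_one]
  · simp [good, connL]
  · intro B hB
    obtain ⟨x, rfl⟩ := mem_blocks.1 hB
    rw [blk_bot, G, cycs, image_singleton, cyc_one]
    simp [aa, uu]

theorem N_main (m : ℕ) : ∀ (V : Setoid α) (σ : Perm α), Resp V σ →
    Fintype.card α + ell σ = m + 2 * (blocks V).card → N m V σ = m.factorial * F V σ := by
  classical
  induction m with
  | zero =>
    intro V σ hV h
    rw [N_zero hV (by omega)]; simp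
  | succ m ih =>
    intro V σ hV hm
    have key : ∀ B ∈ blocks V, ∀ x ∈ B, ∀ y ∈ B.erase x,
        (∑ W : Setoid α, if merge W x y = V then N m W (swap x y * σ) else 0) =
        (m.factorial * ∏ B' ∈ (blocks V).erase B, G σ B') * (if σ.SameCycle x y then
          ∑ A ∈ cutSets (swap x y * σ) B x y, G (swap x y * σ) A * G (swap x y * σ) (B \ A)
          else G (swap x y * σ) B) := by
      intro B hB x hx y hy
      obtain ⟨w, rfl⟩ := mem_blocks.1 hB
      rw [← blk_eq_iff.2 (V.symm (mem_blk.1 hx) : V x w)] at *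
      rw [mem_erase, mem_blk] at hy
      obtain ⟨hyx, hxy⟩ := hy
      have hV' : Resp V (swap x y * σ) := Resp.mul (resp_swap.2 hxy) hV
      split_ifs with hs
      · have hl := ell_cut hs hyx.symm
        have hVz : N m V (swap x y * σ) = 0 := N_rh (by omega)
        rw [mul_sum, ← sum_filter]
        symm
        have : ∀ A ∈ cutSets (swap x y * σ) (blk V x) x y,
           (m.factorial * ∏ B' ∈ (blocks V).erase (blk V x), G σ B') *
            (G (swap x y * σ) A * G (swap x y * σ) (blk V x \ A)) = N m (splitS V A) (swap x y * σ) := by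
          intro A hA
          obtain ⟨a1, a2, a3, a4⟩ := mem_cutSets.1 hA
          have hn : ¬ splitS V A x y := fun h => a4 (h.2.1 a3)
          have hc := card_blocks_split hn
          rw [splitS_merge hxy a1 a3 a4] at hc
          rw [ih _ _ (splitS_resp hV' a2) (by omega), F_split hV hxy a1 a3 a4]
          ring
        rw [sum_congr rfl this]
        rw [← sum_image (f := fun W => N m W (swap x y * σ)) (g := fun A => splitS V A)]
        · apply sum_subset
          · intro W hW
            obtain ⟨A, hA, rfl⟩ := mem_image.1 hW
            obtain ⟨a1, a2, a3, a4⟩ := mem_cutSets.1 hA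
            rw [mem_filter]
            exact ⟨mem_univ _, splitS_merge hxy a1 a3 a4⟩
          · intro W hW hW2
            rw [mem_filter] at hW
            by_cases hWxy : W x y
            · rw [merge_self hWxy] at hW
              rw [hW.2, hVz]
            · apply N_resp
              intro hr
              apply hW2
              rw [mem_image]
              refine ⟨blk W x, ?_, ?_⟩
              · rw [mem_cutSets]
                refine ⟨?_, hr.inv (blk_mem_blocks W x), self_mem_blk W x, fun h => hWxy (mem_blk.1 h)⟩
                intro u hu
                rw [mem_blk] at hu ⊢
                rw [← hW.2]
                exact Or.inl hu
              · rw [← hW.2]; exact splitS_of hWxy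
        · intro A hA A' hA' e
          obtain ⟨a1, a2, a3, a4⟩ := mem_cutSets.1 hA
          obtain ⟨b1, b2, b3, b4⟩ := mem_cutSets.1 hA'
          rw [← splitS_blk a1 a3, ← splitS_blk b1 b3]
          simp only at e
          rw [e]
      · have hl := ell_join hs
        rw [Finset.sum_eq_single V]
        · rw [if_pos (merge_self hxy), ih V _ hV' (by omega), F_eq hV hxy]
          ring
        · intro W _ hW
          split_ifs with hm
          · apply N_resp
            intro hr
            apply hW
            rw [← hm, merge_self]
            exact hr.same (join_same hs)
          · rfl
        · intro h; exact absurd (mem_univ _) h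
    have h2 : 2 * N (m+1) V σ = 2 * ((m+1).factorial * F V σ) := by
      rw [N_succ2, sum_pairs V (fun x y W => N m W (swap x y * σ))]
      have : ∀ B ∈ blocks V, (∑ x ∈ B, ∑ y ∈ B.erase x,
          ∑ W : Setoid α, if merge W x y = V then N m W (swap x y * σ) else 0) =
          2 * (m.factorial * F V σ) * ((B.card : ℝ) + (cycs σ B).card - 2) := by
        intro B hB
        rw [sum_congr rfl (fun x hx => sum_congr rfl (fun y hy => key B hB x hx y hy))]
        simp only [← mul_sum]
        have hBne : B.Nonempty := by
          obtain ⟨w, rfl⟩ := mem_blocks.1 hB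
          exact ⟨w, self_mem_blk V w⟩
        rw [← block_identity (hV.inv hB) hBne, F, ← mul_prod_erase _ _ hB]
        ring
      rw [sum_congr rfl this, ← mul_sum, sum_card_blocks hV, Nat.factorial_succ]
      have hm' : (Fintype.card α : ℝ) + ell σ = (m + 1) + 2 * (blocks V).card := by exact_mod_cast hm
      rw [hm']
      push_cast
      ring
    linarith

end main
end Hur

namespace Hur
open Finset Equiv

section fin
variable {α : Type*} [Fintype α] [DecidableEq α]

theorem connL_le {l : List (Perm α)} {T : Setoid α} (h : ∀ τ ∈ l, Resp T τ) : connL l ≤ T := by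
  induction l with
  | nil => exact bot_le
  | cons τ l ih =>
    exact sup_le (resp_le.1 (h τ List.mem_cons_self)) (ih fun t ht => h t (List.mem_cons_of_mem _ ht))

theorem connL_mem {l : List (Perm α)} {τ : Perm α} (h : τ ∈ l) : Resp (connL l) τ := by
  induction l with
  | nil => simp at h
  | cons t l ih =>
    rcases List.mem_cons.1 h with rfl | h
    · exact resp_le.2 le_sup_left
    · exact (ih h).mono le_sup_right

theorem Resp.inv' {V : Setoid α} {σ : Perm α} (h : Resp V σ) : Resp V σ⁻¹ := by
  intro u
  have := h (σ⁻¹ u)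
  rw [← Perm.mul_apply, mul_inv_cancel, Perm.one_apply] at this
  exact V.symm this

/-- Orbit relation of a subgroup. -/
def orb (H : Subgroup (Perm α)) : Setoid α where
  r u v := ∃ g ∈ H, g u = v
  iseqv := by
    constructor
    · intro u; exact ⟨1, H.one_mem, rfl⟩
    · rintro u v ⟨g, hg, rfl⟩; exact ⟨g⁻¹, H.inv_mem hg, by simp⟩
    · rintro u v w ⟨g, hg, rfl⟩ ⟨k, hk, rfl⟩; exact ⟨k * g, H.mul_mem hk hg, rfl⟩

theorem trans_iff {m : ℕ} (f : Fin m → Perm α) (σ : Perm α) (h : σ * (List.ofFn f).prod = 1) :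
    (∀ x y : α, ∃ g ∈ Subgroup.closure ({σ} ∪ Set.range f), g x = y) ↔ connL (List.ofFn f) = ⊤ := by
  constructor
  · intro ht
    rw [eq_top_iff, Setoid.le_def]
    intro x y hxy
    clear hxy
    obtain ⟨g, hg, rfl⟩ := ht x y
    have : Resp (connL (List.ofFn f)) g := by
      induction hg using Subgroup.closure_induction with
      | mem t ht =>
        rcases ht with ht | ⟨i, rfl⟩
        · rw [Set.mem_singleton_iff] at ht
          rw [ht, eq_inv_of_mul_eq_one_left h]
          exact (connL_resp _).inv'
        · exact connL_mem (List.mem_ofFn.2 ⟨i, rfl⟩)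
      | one => intro u; exact Setoid.refl' _ u
      | mul a b _ _ ha hb => exact ha.mul hb
      | inv a _ ha => exact ha.inv'
    exact this x
  · intro ht x y
    have : connL (List.ofFn f) ≤ orb (Subgroup.closure ({σ} ∪ Set.range f)) := by
      apply connL_le
      intro τ hτ u
      obtain ⟨i, rfl⟩ := List.mem_ofFn.1 hτ
      exact ⟨f i, Subgroup.subset_closure (Or.inr ⟨i, rfl⟩), rfl⟩
    rw [ht, Setoid.le_def] at this
    exact this (x := x) (y := y) trivial

theorem cyc_inv (σ : Perm α) : cyc σ⁻¹ = cyc σ := by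
  funext x
  ext y
  rw [mem_cyc, mem_cyc, Perm.sameCycle_inv]

theorem sq_one {σ : Perm α} (h : σ.cycleType = {2,2,2}) : σ ^ 2 = 1 := by
  have h1 := Perm.lcm_cycleType σ
  rw [h] at h1
  have : orderOf σ = 2 := by rw [← h1]; decide
  rw [← this]; exact pow_orderOf_eq_one σ

theorem card_cyc_two {σ : Perm α} (h : σ.cycleType = {2,2,2}) (x : α) :
    (cyc σ x).card = if x ∈ σ.support then 2 else 1 := by
  have h1 := orbit_finset σ x 2 (by norm_num) (by rw [sq_one h]; rfl)
  have h2 : cyc σ x = {x, σ x} := by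
    rw [h1]
    ext u
    simp [Finset.range_add_one]
    tauto
  rw [h2]
  split_ifs with hs
  · rw [card_pair]
    exact (Perm.mem_support.1 hs).symm
  · rw [Perm.notMem_support.1 hs]; simp

theorem card_supp {σ : Perm α} (h : σ.cycleType = {2,2,2}) : σ.support.card = 6 := by
  rw [← Perm.sum_cycleType, h]; rfl

theorem inv_univ (σ : Perm α) : Inv σ univ := fun _ _ _ _ => mem_univ _

theorem count_two {σ : Perm α} (h : σ.cycleType = {2,2,2}) :
    ((cycs σ univ).filter (fun c => c.card = 2)).card = 3 := by
  have h1 := (inv_univ σ).sum_cyc (fun c => if c.card = 2 then 1 / 2 else 0)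
  have h2 : ∑ c ∈ cycs σ univ, (c.card : ℝ) * (if c.card = 2 then 1 / 2 else 0) =
      ((cycs σ univ).filter (fun c => c.card = 2)).card := by
    rw [card_filter, Nat.cast_sum]
    refine sum_congr rfl fun c _ => ?_
    split_ifs with h
    · rw [h]; norm_num
    · simp
  have h3 : ∑ x ∈ (univ : Finset α), (if (cyc σ x).card = 2 then (1 / 2 : ℝ) else 0) = 3 := by
    have : ∀ x ∈ (univ : Finset α), (if (cyc σ x).card = 2 then (1 / 2 : ℝ) else 0) =
        if x ∈ σ.support then 1 / 2 else 0 := by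
      intro x _
      rw [card_cyc_two h]
      split_ifs <;> simp_all
    rw [sum_congr rfl this, ← sum_filter, sum_const, filter_mem_eq_inter, univ_inter, card_supp h]
    norm_num
  rw [h2, h3] at h1
  exact_mod_cast h1.symm

theorem ell_two {σ : Perm α} (h : σ.cycleType = {2,2,2}) :
    ell σ + 3 = Fintype.card α := by
  have h1 := (inv_univ σ).card
  have h2 : ∀ c ∈ cycs σ univ, (c.card : ℝ) = 1 + if c.card = 2 then 1 else 0 := by
    intro c hc
    obtain ⟨u, _, rfl⟩ := mem_cycs.1 hc
    rw [card_cyc_two h]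
    split_ifs <;> simp_all
    norm_num
  rw [sum_congr rfl h2, sum_add_distrib, ← sum_filter, sum_const, sum_const, count_two h, card_univ] at h1
  simp only [nsmul_eq_mul, mul_one] at h1
  rw [ell]
  exact_mod_cast h1.symm

theorem prod_two {σ : Perm α} (h : σ.cycleType = {2,2,2}) :
    ∏ c ∈ cycs σ univ, aa c.card = 64 := by
  have h2 : ∀ c ∈ cycs σ univ, aa c.card = if c.card = 2 then 4 else 1 := by
    intro c hc
    obtain ⟨u, _, rfl⟩ := mem_cycs.1 hc
    rw [card_cyc_two h]
    split_ifs <;> simp_all [aa, uu]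
    norm_num
  rw [prod_congr rfl h2, prod_ite, prod_const, prod_const, count_two h]
  norm_num

theorem N_two [Nonempty α] {σ : Perm α} (h : σ.cycleType = {2,2,2}) (h6 : 6 ≤ Fintype.card α) :
    N (2 * Fintype.card α - 5) ⊤ σ⁻¹ = ((2 * Fintype.card α - 5).factorial : ℝ) *
      (64 * (Fintype.card α : ℝ) ^ ((Fintype.card α : ℤ) - 6)) := by
  have hb : blocks (⊤ : Setoid α) = {univ} := by
    have : ∀ x : α, blk (⊤ : Setoid α) x = univ := by
      intro x
      ext y
      simp only [mem_blk, mem_univ, iff_true]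
      trivial
    ext B
    rw [mem_blocks, mem_singleton]
    simp only [this]
    simp [eq_comm]
  have hl := ell_two h
  have hc : cycs σ⁻¹ univ = cycs σ univ := by rw [cycs, cycs, cyc_inv]
  have hl' : ell σ⁻¹ = ell σ := by rw [ell, ell, hc]
  rw [N_main _ _ _ (fun _ => trivial) (by rw [hb, hl', card_singleton]; omega), F, hb, prod_singleton,
    G, hc, prod_two h]
  have : ((cycs σ univ).card : ℤ) - 3 = (Fintype.card α : ℤ) - 6 := by
    rw [ell] at hl; omega
  rw [this, card_univ]
  ring

open Classical in
theorem card_eq_sum (m : ℕ) :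
    (Nat.card {p : Perm α × (Fin m → Perm α) //
        p.1.cycleType = {2, 2, 2} ∧
        (∀ i, (p.2 i).IsSwap) ∧
        p.1 * (List.ofFn p.2).prod = 1 ∧
        (∀ x y : α, ∃ g ∈ Subgroup.closure ({p.1} ∪ Set.range p.2),
          g x = y)} : ℝ) = ∑ σ : Perm α with σ.cycleType = {2,2,2}, N m ⊤ σ⁻¹ := by
  rw [Nat.card_eq_fintype_card, Fintype.card_subtype, card_filter, Nat.cast_sum, Fintype.sum_prod_type,
    sum_filter]
  refine sum_congr rfl fun σ _ => ?_
  by_cases hσ : σ.cycleType = {2,2,2}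
  · rw [if_pos hσ, N]
    refine sum_congr rfl fun f _ => ?_
    have : (σ.cycleType = {2, 2, 2} ∧ (∀ i, (f i).IsSwap) ∧ σ * (List.ofFn f).prod = 1 ∧
        (∀ x y : α, ∃ g ∈ Subgroup.closure ({σ} ∪ Set.range f), g x = y)) ↔
        good (List.ofFn f) ⊤ σ⁻¹ := by
      rw [good]
      constructor
      · rintro ⟨-, h1, h2, h3⟩
        refine ⟨?_, eq_inv_of_mul_eq_one_right h2, (trans_iff f σ h2).1 h3⟩
        intro τ hτ
        obtain ⟨i, rfl⟩ := List.mem_ofFn.1 hτ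
        exact h1 i
      · rintro ⟨h1, h2, h3⟩
        have h2' : σ * (List.ofFn f).prod = 1 := by rw [h2, mul_inv_cancel]
        exact ⟨hσ, fun i => h1 _ (List.mem_ofFn.2 ⟨i, rfl⟩), h2', (trans_iff f σ h2').2 h3⟩
    simp only [this]
    split_ifs <;> simp
  · rw [if_neg hσ]
    refine sum_eq_zero fun f _ => ?_
    rw [if_neg (fun h => hσ h.1), Nat.cast_zero]

theorem count_sigma (h6 : 6 ≤ Fintype.card α) :
    (({σ : Perm α | σ.cycleType = {2,2,2}} : Finset (Perm α)).card : ℝ) =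
      (Fintype.card α).factorial / ((Fintype.card α - 6).factorial * 48) := by
  have h := Perm.card_of_cycleType_mul_eq α {2,2,2}
  have e1 : (({2,2,2} : Multiset ℕ)).sum = 6 := rfl
  have e2 : (({2,2,2} : Multiset ℕ)).prod = 8 := rfl
  have e3 : (∏ n ∈ (({2,2,2} : Multiset ℕ)).toFinset, (Multiset.count n ({2,2,2} : Multiset ℕ)).factorial) = 6 := by
    decide
  rw [e1, e2, e3, if_pos ⟨h6, by simp⟩] at h
  rw [eq_div_iff (by positivity), ← h]
  push_cast
  ring

end fin
end Hur


open Equiv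

/-- Genus-zero Hurwitz number h_{1^3}: one branch point of cycle type (2,2,2,1^{n-6}) and 2n-5 transpositions; h_{1^3} = (4/3) * ((2n-5)!/(n-6)!) * n^(n-6). -/
theorem hurwitz_number_1_3 (n : ℕ) (hn : 6 ≤ n) :
    (Nat.card {p : Perm (Fin n) × (Fin (2 * n - 5) → Perm (Fin n)) //
        p.1.cycleType = {2, 2, 2} ∧
        (∀ i, (p.2 i).IsSwap) ∧
        p.1 * (List.ofFn p.2).prod = 1 ∧
        (∀ x y : Fin n, ∃ g ∈ Subgroup.closure ({p.1} ∪ Set.range p.2),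
          g x = y)} : ℚ) =
      (n.factorial : ℚ) * (4 / 3) *
        (((2 * n - 5).factorial : ℚ) / ((n - 6).factorial : ℚ)) *
        (n : ℚ) ^ ((n : ℤ) - 6) := by
  have hne : Nonempty (Fin n) := ⟨⟨0, by omega⟩⟩
  have h6 : 6 ≤ Fintype.card (Fin n) := by simpa using hn
  have h := Hur.card_eq_sum (α := Fin n) (2 * n - 5)
  have hN : ∀ σ ∈ Finset.univ.filter (fun σ : Perm (Fin n) => σ.cycleType = {2,2,2}),
      Hur.N (2 * n - 5) ⊤ σ⁻¹ = ((2 * n - 5).factorial : ℝ) * (64 * (n : ℝ) ^ ((n : ℤ) - 6)) := by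
    intro σ hσ
    have := Hur.N_two (Finset.mem_filter.1 hσ).2 h6
    simpa only [Fintype.card_fin] using this
  have hc := Hur.count_sigma h6
  rw [Fintype.card_fin] at hc
  have hreal := h.trans ((Finset.sum_congr (by congr) hN).trans (by rw [Finset.sum_const, nsmul_eq_mul, hc]))
  have hf : ((n - 6).factorial : ℝ) ≠ 0 := by positivity
  rw [show (n.factorial : ℝ) / ((n - 6).factorial * 48) *
      (((2 * n - 5).factorial : ℝ) * (64 * (n : ℝ) ^ ((n : ℤ) - 6))) =
      (n.factorial : ℝ) * (4 / 3) * (((2 * n - 5).factorial : ℝ) / ((n - 6).factorial : ℝ)) *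
        (n : ℝ) ^ ((n : ℤ) - 6) by field_simp; norm_num] at hreal
  have hinj : Function.Injective ((↑) : ℚ → ℝ) := Rat.cast_injective
  apply hinj
  rw [Rat.cast_natCast, hreal]
  push_cast
  ring
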